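/- arXiv:2107.09829 — 8 statements merged into one kernel-verified Lean document; each statement's English description precedes it below -/
import Mathlib

section
/- Let d be a real number with 0 < d < 1/2. Then the series ∑_{n=1}^∞ ((n+1)^{2d+1} + (n−1)^{2d+1} − 2 n^{2d+1}) of nonnegative terms diverges; i.e., the function n ↦ (n+1)^{2d+1} + (n−1)^{2d+1} − 2 n^{2d+1} is not summable over n ≥ 1. -/
open Real

open Filter

/-!
For `p = 2 * d + 1`, the summands are the successive differences of `n ↦ (n + 1) ^ p - n ^ p`, so
the partial sums telescope. Since `p > 1`, the increment `(x + 1) ^ p - x ^ p` is at least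
`x ^ (p - 1)`, which is unbounded.
-/

theorem not_summable_succ_sub_of_tendsto_atTop {G : Type*} [AddCommGroup G] [PartialOrder G]
    [IsOrderedAddMonoid G] [NoTopOrder G] [TopologicalSpace G] [ClosedIciTopology G] {f : ℕ → G}
    (hf : Tendsto f atTop atTop) : ¬ Summable fun n ↦ f (n + 1) - f n := by
  intro hsum
  have hpartial : Tendsto (fun N ↦ ∑ n ∈ Finset.range N, (f (n + 1) - f n)) atTop atTop := by
    simp only [Finset.sum_range_sub, sub_eq_add_neg _ (f 0)]
    exact tendsto_atTop_add_const_right atTop (-f 0) hf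
  exact not_tendsto_nhds_of_tendsto_atTop hpartial _ hsum.hasSum.tendsto_sum_nat

theorem mul_rpow_sub_one_le_rpow_add_sub_rpow {p x h : ℝ} (hp : 1 ≤ p) (hx : 0 ≤ x)
    (hh : 0 ≤ h) : h * x ^ (p - 1) ≤ (x + h) ^ p - x ^ p := by
  have rpow_eq {y : ℝ} (hy : 0 ≤ y) : y ^ p = y ^ (p - 1) * y := by
    rw [← rpow_add_one' hy (by linarith), sub_add_cancel]
  calc h * x ^ (p - 1) = x ^ (p - 1) * (x + h) - x ^ (p - 1) * x := by ring
    _ ≤ (x + h) ^ (p - 1) * (x + h) - x ^ (p - 1) * x := by gcongr; linarith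
    _ = (x + h) ^ p - x ^ p := by rw [← rpow_eq (add_nonneg hx hh), ← rpow_eq hx]

theorem tendsto_rpow_add_sub_rpow_atTop {p h : ℝ} (hp : 1 < p) (hh : 0 < h) :
    Tendsto (fun x : ℝ ↦ (x + h) ^ p - x ^ p) atTop atTop := by
  refine tendsto_atTop_mono' _ ?_ ((tendsto_rpow_atTop (sub_pos.2 hp)).const_mul_atTop hh)
  filter_upwards [eventually_ge_atTop 0] with x hx
  exact mul_rpow_sub_one_le_rpow_add_sub_rpow hp.le hx hh.le

theorem increment_covariance_not_summable_general {p : ℝ} (hp : 1 < p) :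
    ¬ Summable (fun n : ℕ =>
        (((n : ℝ) + 1) + 1) ^ p + (((n : ℝ) + 1) - 1) ^ p - 2 * ((n : ℝ) + 1) ^ p) := by
  have hincr : Tendsto (fun n : ℕ ↦ ((n : ℝ) + 1) ^ p - (n : ℝ) ^ p) atTop atTop :=
    (tendsto_rpow_add_sub_rpow_atTop hp one_pos).comp tendsto_natCast_atTop_atTop
  refine (summable_congr fun n ↦ ?_).not.mpr (not_summable_succ_sub_of_tendsto_atTop hincr)
  rw [Nat.cast_add_one, add_sub_cancel_right]
  ring

/-- for `d ∈ (0,1/2)`, the series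
`∑_{n=1}^∞ ((n+1)^{2d+1} + (n−1)^{2d+1} − 2 n^{2d+1})` diverges, i.e. the summands
(indexed here by `n + 1` for `n : ℕ`, so the sum runs over `n ≥ 1`) are not summable. -/
theorem increment_covariance_not_summable (d : ℝ) (hd0 : 0 < d) (hd2 : d < 1 / 2) :
    ¬ Summable (fun n : ℕ =>
        (((n : ℝ) + 1) + 1) ^ (2 * d + 1) + (((n : ℝ) + 1) - 1) ^ (2 * d + 1)
          - 2 * ((n : ℝ) + 1) ^ (2 * d + 1)) :=
  increment_covariance_not_summable_general (by linarith)
end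

section
/- Let d be a real number with 0 < d < 1/2 and let λ₁, λ₂ be real numbers with λ₁ < 0 and λ₂ < 0. Then the function (u,v) ↦ e^{λ₁ u + λ₂ v} |u − v|^{2d−1} is integrable on (0,∞) × (0,∞) and ∫_0^∞ ∫_0^∞ e^{λ₁ u + λ₂ v} |u − v|^{2d−1} dv du = Γ(2d) ((−λ₁)^{−2d} + (−λ₂)^{−2d}) / (−(λ₁ + λ₂)). -/
open MeasureTheory Real Set

/-! Cut the quadrant along the diagonal. In the coordinates `x = u`, `y = v - u` the part `u ≤ v`
becomes a product set and the integrand `exp (a * u + b * v) • k (u - v)` factors as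
`exp ((a + b) * x) • (exp (b * y) • k (-y))`; the part `v < u` is handled in the same way after
exchanging `u` and `v`. The double integral is therefore `1 / (-(a + b))` times the sum of the
Laplace transforms of `k` at `-a` and of its reflection at `-b`, and for
`k x = |x| ^ (2 * d - 1)` both are Gamma integrals. -/

/-- The part of the half-plane `0 < u` where `v - u ∈ s`, which the shear `(u, v) ↦ (u, v - u)`
maps onto a product set. With `s = Ici 0` or `s = Ioi 0` it is the part of the quadrant on or above,
respectively strictly above, the diagonal. -/
def shearedStrip (s : Set ℝ) : Set (ℝ × ℝ) :=
  {p | 0 < p.1 ∧ p.2 - p.1 ∈ s}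

lemma shearedStrip_eq_preimage (s : Set ℝ) :
    shearedStrip s = MeasurableEquiv.shearSubRight ℝ ⁻¹' (Ioi 0 ×ˢ s) :=
  rfl

lemma measurableSet_shearedStrip {s : Set ℝ} (hs : MeasurableSet s) :
    MeasurableSet (shearedStrip s) :=
  (MeasurableEquiv.shearSubRight ℝ).measurable (measurableSet_Ioi.prod hs)

lemma Ioi_prod_Ioi_eq_shearedStrip_union :
    Ioi (0 : ℝ) ×ˢ Ioi (0 : ℝ) =
      shearedStrip (Ici 0) ∪ Prod.swap ⁻¹' shearedStrip (Ioi 0) := by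
  ext ⟨u, v⟩
  simp only [shearedStrip, mem_prod, mem_union, mem_preimage, mem_ofPred_eq, Prod.swap_prod_mk,
    mem_Ioi, mem_Ici]
  grind

lemma disjoint_shearedStrip_swap_preimage :
    Disjoint (shearedStrip (Ici 0)) (Prod.swap ⁻¹' shearedStrip (Ioi 0)) := by
  refine disjoint_left.2 fun p ⟨_, fst_le_snd⟩ ⟨_, snd_lt_fst⟩ => ?_
  exact (sub_pos.1 (mem_Ioi.1 snd_lt_fst)).not_ge (sub_nonneg.1 (mem_Ici.1 fst_le_snd))

lemma measurePreserving_shearSubRight :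
    MeasurePreserving (MeasurableEquiv.shearSubRight ℝ) volume volume :=
  measurePreserving_prod_sub volume volume

section ExponentialKernel

variable {E : Type*} [NormedAddCommGroup E] [NormedSpace ℝ E] {a b : ℝ}

lemma exp_smul_sub_eq_shearSubRight (a b : ℝ) (f : ℝ → E) (p : ℝ × ℝ) :
    exp (a * p.1 + b * p.2) • f (p.2 - p.1) =
      exp ((a + b) * (MeasurableEquiv.shearSubRight ℝ p).1) •
        (exp (b * (MeasurableEquiv.shearSubRight ℝ p).2) •
          f (MeasurableEquiv.shearSubRight ℝ p).2) := by
  change _ = exp ((a + b) * p.1) • (exp (b * (p.2 - p.1)) • f (p.2 - p.1))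
  rw [smul_smul, ← exp_add]
  ring_nf

lemma integrableOn_shearedStrip_exp_smul (hab : a + b < 0) {f : ℝ → E} {s : Set ℝ}
    (hf : IntegrableOn (fun y => exp (b * y) • f y) s) :
    IntegrableOn (fun p : ℝ × ℝ => exp (a * p.1 + b * p.2) • f (p.2 - p.1)) (shearedStrip s) := by
  have product_integrable : IntegrableOn
      (fun z : ℝ × ℝ => exp ((a + b) * z.1) • (exp (b * z.2) • f z.2)) (Ioi 0 ×ˢ s) := by
    rw [IntegrableOn, Measure.volume_eq_prod, ← Measure.prod_restrict]
    exact (integrableOn_exp_mul_Ioi hab 0).smul_prod hf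
  simp only [exp_smul_sub_eq_shearSubRight]
  exact (measurePreserving_shearSubRight.integrableOn_comp_preimage
    (MeasurableEquiv.measurableEmbedding _)).2 product_integrable

lemma setIntegral_shearedStrip_exp_smul (hab : a + b < 0) (f : ℝ → E) (s : Set ℝ) :
    ∫ p in shearedStrip s, exp (a * p.1 + b * p.2) • f (p.2 - p.1) =
      (-(a + b))⁻¹ • ∫ y in s, exp (b * y) • f y := by
  simp only [exp_smul_sub_eq_shearSubRight, shearedStrip_eq_preimage]
  calc
    _ = ∫ z in Ioi 0 ×ˢ s, exp ((a + b) * z.1) • (exp (b * z.2) • f z.2) :=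
      measurePreserving_shearSubRight.setIntegral_preimage_emb
        (MeasurableEquiv.measurableEmbedding _) _ _
    _ = (∫ x in Ioi 0, exp ((a + b) * x)) • ∫ y in s, exp (b * y) • f y := by
      rw [Measure.volume_eq_prod, ← Measure.prod_restrict]
      exact integral_prod_smul (fun x => exp ((a + b) * x)) (fun y => exp (b * y) • f y)
    _ = (-(a + b))⁻¹ • ∫ y in s, exp (b * y) • f y := by
      rw [integral_exp_mul_Ioi hab, mul_zero, exp_zero, inv_neg, neg_div, one_div]

lemma integrableOn_swap_preimage_shearedStrip_exp_smul (hab : a + b < 0) {f : ℝ → E} {s : Set ℝ}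
    (hf : IntegrableOn (fun x => exp (a * x) • f x) s) :
    IntegrableOn (fun p : ℝ × ℝ => exp (a * p.1 + b * p.2) • f (p.1 - p.2))
      (Prod.swap ⁻¹' shearedStrip s) := by
  simp only [add_comm (a * _)]
  exact (Measure.measurePreserving_swap.integrableOn_comp_preimage
    MeasurableEquiv.prodComm.measurableEmbedding).2
      (integrableOn_shearedStrip_exp_smul (add_comm a b ▸ hab) hf)

lemma setIntegral_swap_preimage_shearedStrip_exp_smul (hab : a + b < 0) (f : ℝ → E)
    (s : Set ℝ) :
    ∫ p in Prod.swap ⁻¹' shearedStrip s, exp (a * p.1 + b * p.2) • f (p.1 - p.2) =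
      (-(a + b))⁻¹ • ∫ x in s, exp (a * x) • f x := by
  rw [add_comm] at hab
  simp only [add_comm (a * _), add_comm a b, ← setIntegral_shearedStrip_exp_smul hab]
  exact Measure.measurePreserving_swap.setIntegral_preimage_emb
    MeasurableEquiv.prodComm.measurableEmbedding
    (fun p : ℝ × ℝ => exp (b * p.1 + a * p.2) • f (p.2 - p.1)) _

lemma integrableOn_shearedStrip_exp_smul_fst_sub_snd (hab : a + b < 0) {k : ℝ → E}
    (hb : IntegrableOn (fun x => exp (b * x) • k (-x)) (Ioi 0)) :
    IntegrableOn (fun p : ℝ × ℝ => exp (a * p.1 + b * p.2) • k (p.1 - p.2))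
      (shearedStrip (Ici 0)) := by
  simpa only [neg_sub] using integrableOn_shearedStrip_exp_smul
    (f := fun y => k (-y)) hab ((integrableOn_Ici_iff_integrableOn_Ioi).2 hb)

theorem integrableOn_Ioi_prod_Ioi_exp_smul_sub (hab : a + b < 0) {k : ℝ → E}
    (ha : IntegrableOn (fun x => exp (a * x) • k x) (Ioi 0))
    (hb : IntegrableOn (fun x => exp (b * x) • k (-x)) (Ioi 0)) :
    IntegrableOn (fun p : ℝ × ℝ => exp (a * p.1 + b * p.2) • k (p.1 - p.2))
      (Ioi 0 ×ˢ Ioi 0) := by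
  rw [Ioi_prod_Ioi_eq_shearedStrip_union]
  exact (integrableOn_shearedStrip_exp_smul_fst_sub_snd hab hb).union
    (integrableOn_swap_preimage_shearedStrip_exp_smul hab ha)

theorem integral_Ioi_integral_Ioi_exp_smul_sub (hab : a + b < 0) {k : ℝ → E}
    (ha : IntegrableOn (fun x => exp (a * x) • k x) (Ioi 0))
    (hb : IntegrableOn (fun x => exp (b * x) • k (-x)) (Ioi 0)) :
    ∫ u in Ioi (0 : ℝ), ∫ v in Ioi (0 : ℝ), exp (a * u + b * v) • k (u - v) =
      (-(a + b))⁻¹ •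
        ((∫ x in Ioi (0 : ℝ), exp (a * x) • k x) + ∫ x in Ioi (0 : ℝ), exp (b * x) • k (-x)) := by
  have integral_above_diagonal :
      ∫ p in shearedStrip (Ici 0), exp (a * p.1 + b * p.2) • k (p.1 - p.2) =
        (-(a + b))⁻¹ • ∫ x in Ioi (0 : ℝ), exp (b * x) • k (-x) := by
    simpa only [neg_sub, integral_Ici_eq_integral_Ioi] using
      setIntegral_shearedStrip_exp_smul hab (fun y => k (-y)) (Ici 0)
  calc
    _ = ∫ p in Ioi (0 : ℝ) ×ˢ Ioi (0 : ℝ), exp (a * p.1 + b * p.2) • k (p.1 - p.2) :=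
      (setIntegral_prod _ (integrableOn_Ioi_prod_Ioi_exp_smul_sub hab ha hb)).symm
    _ = (∫ p in shearedStrip (Ici 0), exp (a * p.1 + b * p.2) • k (p.1 - p.2)) +
        ∫ p in Prod.swap ⁻¹' shearedStrip (Ioi 0),
          exp (a * p.1 + b * p.2) • k (p.1 - p.2) := by
      rw [Ioi_prod_Ioi_eq_shearedStrip_union]
      exact setIntegral_union disjoint_shearedStrip_swap_preimage
        (measurable_swap (measurableSet_shearedStrip measurableSet_Ioi))
        (integrableOn_shearedStrip_exp_smul_fst_sub_snd hab hb)
        (integrableOn_swap_preimage_shearedStrip_exp_smul hab ha)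
    _ = _ := by
      rw [integral_above_diagonal, setIntegral_swap_preimage_shearedStrip_exp_smul hab,
        ← smul_add, add_comm (∫ x in Ioi (0 : ℝ), exp (b * x) • k (-x))]

end ExponentialKernel

lemma integrableOn_Ioi_exp_mul_abs_rpow {l p : ℝ} (hl : l < 0) (hp : -1 < p) :
    IntegrableOn (fun x : ℝ => exp (l * x) * |x| ^ p) (Ioi 0) := by
  refine (integrableOn_rpow_mul_exp_neg_mul_rpow hp one_pos (neg_pos.2 hl)).congr_fun
    (fun x hx => ?_) measurableSet_Ioi
  simp only [neg_neg, rpow_one, abs_of_pos (mem_Ioi.1 hx), mul_comm]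

lemma integral_Ioi_exp_mul_abs_rpow {l s : ℝ} (hl : l < 0) (hs : 0 < s) :
    ∫ x in Ioi (0 : ℝ), exp (l * x) * |x| ^ (s - 1) = Gamma s * (-l) ^ (-s) := by
  calc
    _ = ∫ x in Ioi (0 : ℝ), x ^ (s - 1) * exp (-(-l * x)) :=
      setIntegral_congr_fun measurableSet_Ioi fun x hx => by
        simp only [neg_mul, neg_neg, abs_of_pos (mem_Ioi.1 hx), mul_comm (exp _)]
    _ = Gamma s * (-l) ^ (-s) := by
      rw [integral_rpow_mul_exp_neg_mul_Ioi hs (neg_pos.2 hl), one_div,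
        inv_rpow (neg_pos.2 hl).le, rpow_neg (neg_pos.2 hl).le, mul_comm]

theorem flou_cross_covariance_integral_general (d l₁ l₂ : ℝ) (hd0 : 0 < d)
    (hl₁ : l₁ < 0) (hl₂ : l₂ < 0) :
    IntegrableOn (fun p : ℝ × ℝ =>
        Real.exp (l₁ * p.1 + l₂ * p.2) * |p.1 - p.2| ^ (2 * d - 1))
      (Ioi (0 : ℝ) ×ˢ Ioi (0 : ℝ)) ∧
    ∫ u in Ioi (0 : ℝ), ∫ v in Ioi (0 : ℝ),
        Real.exp (l₁ * u + l₂ * v) * |u - v| ^ (2 * d - 1) =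
      Real.Gamma (2 * d) * ((-l₁) ^ (-(2 * d)) + (-l₂) ^ (-(2 * d))) / (-(l₁ + l₂)) := by
  have integrable_kernel {l : ℝ} (hl : l < 0) :
      IntegrableOn (fun x : ℝ => exp (l * x) * |x| ^ (2 * d - 1)) (Ioi 0) :=
    integrableOn_Ioi_exp_mul_abs_rpow hl (by linarith)
  have integrable_reflected :
      IntegrableOn (fun x : ℝ => exp (l₂ * x) * |(-x)| ^ (2 * d - 1)) (Ioi 0) := by
    simpa only [abs_neg] using integrable_kernel hl₂
  refine ⟨integrableOn_Ioi_prod_Ioi_exp_smul_sub (k := fun x => |x| ^ (2 * d - 1))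
    (add_neg hl₁ hl₂) (integrable_kernel hl₁) integrable_reflected, ?_⟩
  refine (integral_Ioi_integral_Ioi_exp_smul_sub (k := fun x => |x| ^ (2 * d - 1))
    (add_neg hl₁ hl₂) (integrable_kernel hl₁) integrable_reflected).trans ?_
  simp only [smul_eq_mul, abs_neg]
  rw [integral_Ioi_exp_mul_abs_rpow hl₁ (by linarith),
    integral_Ioi_exp_mul_abs_rpow hl₂ (by linarith), ← mul_add, inv_mul_eq_div]

/-- for `d ∈ (0,1/2)` and `λ₁, λ₂ < 0`, the function
`(u,v) ↦ e^{λ₁u + λ₂v} |u−v|^{2d−1}` is integrable on `(0,∞)²` and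
`∫∫ e^{λ₁u+λ₂v}|u−v|^{2d−1} dv du = Γ(2d)((−λ₁)^{−2d} + (−λ₂)^{−2d})/(−(λ₁+λ₂))`. -/
theorem flou_cross_covariance_integral (d l₁ l₂ : ℝ) (hd0 : 0 < d) (hd2 : d < 1 / 2)
    (hl₁ : l₁ < 0) (hl₂ : l₂ < 0) :
    IntegrableOn (fun p : ℝ × ℝ =>
        Real.exp (l₁ * p.1 + l₂ * p.2) * |p.1 - p.2| ^ (2 * d - 1))
      (Ioi (0 : ℝ) ×ˢ Ioi (0 : ℝ)) ∧
    ∫ u in Ioi (0 : ℝ), ∫ v in Ioi (0 : ℝ),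
        Real.exp (l₁ * u + l₂ * v) * |u - v| ^ (2 * d - 1) =
      Real.Gamma (2 * d) * ((-l₁) ^ (-(2 * d)) + (-l₂) ^ (-(2 * d))) / (-(l₁ + l₂)) :=
  flou_cross_covariance_integral_general d l₁ l₂ hd0 hl₁ hl₂
end

section
/- Let d be a real number with 0 < d < 1/2 and let λ < 0. Then the function (u,v) ↦ e^{λ(u+v)} |u − v|^{2d−1} is integrable on (0,∞) × (0,∞) and ∫_0^∞ ∫_0^∞ e^{λ(u+v)} |u − v|^{2d−1} du dv = Γ(2d)/(−λ)^{2d+1}. -/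
open MeasureTheory Real Set

/-!
The point `(u, v)` is determined by `x = min u v` and `t = u - v`: it is `(x + t⁺, x + t⁻)`.
This reparametrization preserves Lebesgue measure and turns the quadrant `(a, ∞)²` into the product
`(a, ∞) × ℝ`. Since `u + v = 2 x + |t|`, a kernel `e^{λ(u+v)} φ(u - v)` becomes
`e^{2λx} · e^{λ|t|} φ(t)`, so its integral is a product of one-dimensional integrals; for
`φ(t) = |t|^{2d-1}` the second factor is twice an Euler integral.
-/

variable {E : Type*} [NormedAddCommGroup E]

lemma integrable_comp_abs {f : ℝ → E} (hf : IntegrableOn f (Ioi 0)) :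
    Integrable fun x ↦ f |x| := by
  have hpos : IntegrableOn (fun x ↦ f |x|) (Ioi 0) :=
    hf.congr_fun (fun x hx ↦ by rw [abs_of_pos hx]) measurableSet_Ioi
  have hneg : IntegrableOn (fun x ↦ f |x|) (Iic 0) := by
    rw [integrableOn_Iic_iff_integrableOn_Iio]
    have hreflect := IntegrableOn.comp_neg_Iio (c := 0) (f := fun x ↦ f |x|) (by rwa [neg_zero])
    simpa only [abs_neg] using hreflect
  rw [← integrableOn_univ, ← Iic_union_Ioi (a := (0 : ℝ))]
  exact hneg.union hpos

/-- The point `(u, v)` of the plane with minimum `min u v = p.1` and difference `u - v = p.2`. -/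
def ofMinSub (p : ℝ × ℝ) : ℝ × ℝ := (p.1 + p.2⁺, p.1 + p.2⁻)

lemma min_ofMinSub (p : ℝ × ℝ) : min (ofMinSub p).1 (ofMinSub p).2 = p.1 := by
  rw [ofMinSub, min_add_add_left, posPart_inf_negPart_eq_zero, add_zero]

lemma ofMinSub_fst_sub_snd (p : ℝ × ℝ) : (ofMinSub p).1 - (ofMinSub p).2 = p.2 := by
  rw [ofMinSub, add_sub_add_left_eq_sub, posPart_sub_negPart]

lemma ofMinSub_fst_add_snd (p : ℝ × ℝ) :
    (ofMinSub p).1 + (ofMinSub p).2 = 2 * p.1 + |p.2| := by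
  rw [ofMinSub, ← posPart_add_negPart]
  ring

lemma ofMinSub_injective : Function.Injective ofMinSub := fun p q h ↦
  Prod.ext (by rw [← min_ofMinSub p, h, min_ofMinSub])
    (by rw [← ofMinSub_fst_sub_snd p, h, ofMinSub_fst_sub_snd])

lemma ofMinSub_preimage_Ioi_prod_Ioi (a : ℝ) :
    ofMinSub ⁻¹' (Ioi a ×ˢ Ioi a) = Ioi a ×ˢ univ := by
  ext p
  simp only [mem_preimage, mem_prod, mem_Ioi, ← lt_min_iff, min_ofMinSub, mem_univ, and_true]

lemma measurePreserving_ofMinSub : MeasurePreserving ofMinSub := by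
  have shear : MeasurePreserving fun p : ℝ × ℝ ↦ (p.1, p.2 + p.1⁻) :=
    (MeasurePreserving.id volume).skew_product (g := fun t x : ℝ ↦ x + t⁻)
      (by simp only [negPart_def]; fun_prop) (.of_forall fun t ↦ map_add_right_eq_self volume t⁻)
  have comp_eq : ofMinSub =
      (fun p ↦ (p.1 + p.2, p.2)) ∘ (fun p ↦ (p.1, p.2 + p.1⁻)) ∘ Prod.swap := by
    funext ⟨x, t⟩
    ext
    · change x + t⁺ = t + (x + t⁻)
      linarith [posPart_sub_negPart t]
    · rfl
  exact comp_eq ▸ (measurePreserving_add_prod volume volume).comp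
    (shear.comp Measure.measurePreserving_swap)

lemma measurableEmbedding_ofMinSub : MeasurableEmbedding ofMinSub :=
  measurePreserving_ofMinSub.measurable.measurableEmbedding ofMinSub_injective

variable [NormedSpace ℝ E]

lemma exp_smul_comp_ofMinSub (l : ℝ) (φ : ℝ → E) (p : ℝ × ℝ) :
    exp (l * ((ofMinSub p).1 + (ofMinSub p).2)) • φ ((ofMinSub p).1 - (ofMinSub p).2) =
      exp (2 * l * p.1) • exp (l * |p.2|) • φ p.2 := by
  rw [ofMinSub_fst_add_snd, ofMinSub_fst_sub_snd, smul_smul, ← exp_add]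
  ring_nf

lemma integrableOn_exp_mul_add_smul_sub_Ioi_prod_Ioi {l : ℝ} (hl : l < 0) (a : ℝ) {φ : ℝ → E}
    (hφ : Integrable fun t ↦ exp (l * |t|) • φ t) :
    IntegrableOn (fun p : ℝ × ℝ ↦ exp (l * (p.1 + p.2)) • φ (p.1 - p.2)) (Ioi a ×ˢ Ioi a) := by
  rw [← measurePreserving_ofMinSub.integrableOn_comp_preimage measurableEmbedding_ofMinSub,
    ofMinSub_preimage_Ioi_prod_Ioi, IntegrableOn, Measure.volume_eq_prod, ← Measure.prod_restrict,
    Measure.restrict_univ]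
  have hexp : IntegrableOn (fun x ↦ exp (2 * l * x)) (Ioi a) :=
    integrableOn_exp_mul_Ioi (by linarith) a
  simpa only [Function.comp_def, exp_smul_comp_ofMinSub] using hexp.smul_prod hφ

lemma setIntegral_exp_mul_add_smul_sub_Ioi_prod_Ioi {l : ℝ} (hl : l < 0) (a : ℝ) (φ : ℝ → E) :
    ∫ p in Ioi a ×ˢ Ioi a, exp (l * (p.1 + p.2)) • φ (p.1 - p.2) =
      (-exp (2 * l * a) / (2 * l)) • ∫ t, exp (l * |t|) • φ t := by
  calc ∫ p in Ioi a ×ˢ Ioi a, exp (l * (p.1 + p.2)) • φ (p.1 - p.2)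
      = ∫ p in Ioi a ×ˢ univ, exp (2 * l * p.1) • exp (l * |p.2|) • φ p.2 := by
        rw [← measurePreserving_ofMinSub.setIntegral_preimage_emb measurableEmbedding_ofMinSub,
          ofMinSub_preimage_Ioi_prod_Ioi]
        simp only [exp_smul_comp_ofMinSub]
    _ = (∫ x in Ioi a, exp (2 * l * x)) • ∫ t, exp (l * |t|) • φ t := by
        rw [Measure.volume_eq_prod, ← Measure.prod_restrict, Measure.restrict_univ]
        exact integral_prod_smul (fun x ↦ exp (2 * l * x)) fun t ↦ exp (l * |t|) • φ t
    _ = (-exp (2 * l * a) / (2 * l)) • ∫ t, exp (l * |t|) • φ t := by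
        rw [integral_exp_mul_Ioi (by linarith)]

lemma integrable_exp_mul_abs_mul_abs_rpow {l a : ℝ} (hl : l < 0) (ha : 0 < a) :
    Integrable fun t : ℝ ↦ exp (l * |t|) * |t| ^ (a - 1) := by
  refine integrable_comp_abs (f := fun t ↦ exp (l * t) * t ^ (a - 1)) ?_
  simpa only [neg_neg, rpow_one, mul_comm] using
    integrableOn_rpow_mul_exp_neg_mul_rpow (by linarith : -1 < a - 1) one_pos (neg_pos.2 hl)

lemma integral_exp_mul_abs_mul_abs_rpow {l a : ℝ} (hl : l < 0) (ha : 0 < a) :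
    ∫ t : ℝ, exp (l * |t|) * |t| ^ (a - 1) = 2 * (Gamma a / (-l) ^ a) := by
  have euler := integral_rpow_mul_exp_neg_mul_Ioi ha (neg_pos.2 hl)
  rw [integral_comp_abs (f := fun t ↦ exp (l * t) * t ^ (a - 1))]
  simp only [neg_mul, neg_neg, mul_comm (_ ^ (a - 1))] at euler
  rw [euler, one_div, inv_rpow (neg_nonneg.2 hl.le), inv_mul_eq_div]

theorem flou_second_moment_integral_general (d l : ℝ) (hd0 : 0 < d) (hl : l < 0) :
    IntegrableOn (fun p : ℝ × ℝ =>
        Real.exp (l * (p.1 + p.2)) * |p.1 - p.2| ^ (2 * d - 1))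
      (Ioi (0 : ℝ) ×ˢ Ioi (0 : ℝ)) ∧
    ∫ v in Ioi (0 : ℝ), ∫ u in Ioi (0 : ℝ),
        Real.exp (l * (u + v)) * |u - v| ^ (2 * d - 1) =
      Real.Gamma (2 * d) / (-l) ^ (2 * d + 1) := by
  have hl' : 0 < -l := neg_pos.2 hl
  have ha : 0 < 2 * d := by positivity
  have hint := integrableOn_exp_mul_add_smul_sub_Ioi_prod_Ioi hl 0
    (integrable_exp_mul_abs_mul_abs_rpow hl ha)
  simp only [smul_eq_mul] at hint
  refine ⟨hint, ?_⟩
  rw [IntegrableOn, Measure.volume_eq_prod, ← Measure.prod_restrict] at hint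
  calc ∫ v in Ioi (0 : ℝ), ∫ u in Ioi (0 : ℝ), exp (l * (u + v)) * |u - v| ^ (2 * d - 1)
      = ∫ p in Ioi (0 : ℝ) ×ˢ Ioi (0 : ℝ), exp (l * (p.1 + p.2)) * |p.1 - p.2| ^ (2 * d - 1) := by
        rw [Measure.volume_eq_prod, ← Measure.prod_restrict, integral_prod_symm _ hint]
    _ = -exp (2 * l * 0) / (2 * l) * ∫ t : ℝ, exp (l * |t|) * |t| ^ (2 * d - 1) :=
        setIntegral_exp_mul_add_smul_sub_Ioi_prod_Ioi hl 0 fun t ↦ |t| ^ (2 * d - 1)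
    _ = Gamma (2 * d) / (-l) ^ (2 * d + 1) := by
        rw [integral_exp_mul_abs_mul_abs_rpow hl ha, rpow_add_one hl'.ne', mul_zero, exp_zero]
        field_simp

/-- for `d ∈ (0,1/2)` and `λ < 0`, the function
`(u,v) ↦ e^{λ(u+v)} |u−v|^{2d−1}` is integrable on `(0,∞)²` and
`∫∫ e^{λ(u+v)}|u−v|^{2d−1} du dv = Γ(2d)/(−λ)^{2d+1}`. -/
theorem flou_second_moment_integral (d l : ℝ) (hd0 : 0 < d) (hd2 : d < 1 / 2) (hl : l < 0) :
    IntegrableOn (fun p : ℝ × ℝ =>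
        Real.exp (l * (p.1 + p.2)) * |p.1 - p.2| ^ (2 * d - 1))
      (Ioi (0 : ℝ) ×ˢ Ioi (0 : ℝ)) ∧
    ∫ v in Ioi (0 : ℝ), ∫ u in Ioi (0 : ℝ),
        Real.exp (l * (u + v)) * |u - v| ^ (2 * d - 1) =
      Real.Gamma (2 * d) / (-l) ^ (2 * d + 1) :=
  flou_second_moment_integral_general d l hd0 hl
end

section
/- Let d and h be real numbers with 0 < d < 1/2 and 0 < h < 1/2 − d, and let α > 0. Then the function (u,v) ↦ (1 + u/α)^{h−1} (1 + v/α)^{h−1} |u − v|^{2d−1} is integrable on (0,∞) × (0,∞) and ∫_0^∞ ∫_0^∞ (1 + u/α)^{h−1} (1 + v/α)^{h−1} |u − v|^{2d−1} dv du = 2 α^{2d+1} B(1 − h − 2d, 2d) / (1 − 2(h + d)), where B denotes the Beta function. -/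
open MeasureTheory Real Set

/-!
Put `x = u + α`, `y = v + α`. Up to a power of `α`, the integrand becomes the kernel
`x ^ s * y ^ t * |x - y| ^ (q - 1)` on `(α, ∞)²`, with `s = t = h - 1` and `q = 2 * d`. On the
triangle `x < y` the substitution `y = x / z` turns the integral over `y` into a Beta integral
times `x ^ (s + t + q)`, so that a pure power of `x` is left to integrate. The triangle `y < x`
contributes the same with `s` and `t` exchanged. As everything is nonnegative, computing the
Lebesgue integral in `[0, ∞]` also gives integrability.
-/

open ProbabilityTheory (beta beta_pos)

section SplitDiagonal

variable {X : Type*} [LinearOrder X] [TopologicalSpace X] [OrderClosedTopology X]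
  [MeasurableSpace X] [OpensMeasurableSpace X] {μ ν : Measure X}

theorem lintegral_eq_lintegral_Iio_add_lintegral_Ioi [NullSingletonClass μ] (f : X → ENNReal)
    (a : X) :
    ∫⁻ x, f x ∂μ = ∫⁻ x in Iio a, f x ∂μ + ∫⁻ x in Ioi a, f x ∂μ := by
  rw [setLIntegral_congr Iio_ae_eq_Iic, ← compl_Iic, lintegral_add_compl f measurableSet_Iic]

variable [SecondCountableTopology X] [SFinite ν] {F : X → X → ENNReal}

theorem aemeasurable_lintegral_Ioi (hF : AEMeasurable (Function.uncurry F) (μ.prod ν)) :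
    AEMeasurable (fun x ↦ ∫⁻ y in Ioi x, F x y ∂ν) μ := by
  simp_rw [← lintegral_indicator measurableSet_Ioi]
  exact (hF.indicator (measurableSet_lt measurable_fst measurable_snd)).lintegral_prod_right'

variable [SFinite μ]

theorem lintegral_lintegral_Iio_swap (hF : AEMeasurable (Function.uncurry F) (μ.prod ν)) :
    ∫⁻ x, ∫⁻ y in Iio x, F x y ∂ν ∂μ = ∫⁻ y, ∫⁻ x in Ioi y, F x y ∂μ ∂ν := by
  simp_rw [← lintegral_indicator measurableSet_Iio, ← lintegral_indicator measurableSet_Ioi]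
  exact lintegral_lintegral_swap (hF.indicator (measurableSet_lt measurable_snd measurable_fst))

theorem lintegral_lintegral_eq_add_lintegral_Ioi [NullSingletonClass ν]
    (hF : AEMeasurable (Function.uncurry F) (μ.prod ν)) :
    ∫⁻ x, ∫⁻ y, F x y ∂ν ∂μ =
      ∫⁻ x, ∫⁻ y in Ioi x, F x y ∂ν ∂μ + ∫⁻ y, ∫⁻ x in Ioi y, F x y ∂μ ∂ν := by
  have hsplit (x : X) : ∫⁻ y, F x y ∂ν = ∫⁻ y in Iio x, F x y ∂ν + ∫⁻ y in Ioi x, F x y ∂ν :=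
    lintegral_eq_lintegral_Iio_add_lintegral_Ioi (F x) x
  rw [lintegral_congr hsplit, lintegral_add_right' _ (aemeasurable_lintegral_Ioi hF),
    lintegral_lintegral_Iio_swap hF, add_comm]

end SplitDiagonal

theorem integrable_and_integral_eq_of_lintegral_ofReal_eq {X : Type*} [MeasurableSpace X]
    {μ : Measure X} {f : X → ℝ} {c : ℝ} (hfm : AEStronglyMeasurable f μ) (hf : 0 ≤ᵐ[μ] f)
    (hc : 0 ≤ c) (h : ∫⁻ x, ENNReal.ofReal (f x) ∂μ = ENNReal.ofReal c) :
    Integrable f μ ∧ ∫ x, f x ∂μ = c := by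
  refine ⟨(lintegral_ofReal_ne_top_iff_integrable hfm hf).1 (h ▸ ENNReal.ofReal_ne_top), ?_⟩
  rw [integral_eq_lintegral_of_nonneg_ae hf hfm, h, ENNReal.toReal_ofReal hc]

section PowerIntegrals

theorem lintegral_Ioo_rpow_mul_one_sub_rpow {p q : ℝ} (hp : 0 < p) (hq : 0 < q) :
    ∫⁻ z in Ioo (0 : ℝ) 1, ENNReal.ofReal (z ^ (p - 1) * (1 - z) ^ (q - 1)) =
      ENNReal.ofReal (beta p q) := by
  have hpdf := ProbabilityTheory.lintegral_betaPDF_eq_one hp hq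
  simp only [ProbabilityTheory.lintegral_betaPDF, mul_assoc,
    ENNReal.ofReal_mul (one_div_pos.2 (beta_pos hp hq)).le] at hpdf
  rw [lintegral_const_mul' _ _ ENNReal.ofReal_ne_top, one_div,
    ENNReal.ofReal_inv_of_pos (beta_pos hp hq), mul_comm] at hpdf
  simpa using ENNReal.eq_inv_of_mul_eq_one_left hpdf

theorem lintegral_Ioi_rpow_of_lt {s c : ℝ} (hs : s < -1) (hc : 0 < c) :
    ∫⁻ x in Ioi c, ENNReal.ofReal (x ^ s) = ENNReal.ofReal (-c ^ (s + 1) / (s + 1)) := by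
  rw [← integral_Ioi_rpow_of_lt hs hc,
    ofReal_integral_eq_lintegral_ofReal (integrableOn_Ioi_rpow_of_lt hs hc)]
  filter_upwards [self_mem_ae_restrict measurableSet_Ioi] with x hx
  exact rpow_nonneg (hc.trans hx).le s

theorem image_div_Ioo_zero_one {x : ℝ} (hx : 0 < x) : (fun z ↦ x / z) '' Ioo 0 1 = Ioi x := by
  simp_rw [div_eq_mul_inv]
  rw [← image_image (x * ·) (·⁻¹), image_inv_eq_inv, inv_Ioo_0_left one_pos,
    image_mul_left_Ioi hx, inv_one, mul_one]

theorem lintegral_Ioi_eq_lintegral_Ioo_div {x : ℝ} (hx : 0 < x) (g : ℝ → ENNReal) :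
    ∫⁻ y in Ioi x, g y = ∫⁻ z in Ioo (0 : ℝ) 1, ENNReal.ofReal (x / z ^ 2) * g (x / z) := by
  have hderiv : ∀ z ∈ Ioo (0 : ℝ) 1,
      HasDerivWithinAt (fun z ↦ x / z) (-(x / z ^ 2)) (Ioo 0 1) z := fun z hz ↦ by
    simpa [div_eq_mul_inv] using ((hasDerivAt_inv hz.1.ne').const_mul x).hasDerivWithinAt
  have hanti : AntitoneOn (fun z ↦ x / z) (Ioo 0 1) := fun z hz w _ hzw ↦
    div_le_div_of_nonneg_left hx.le hz.1 hzw
  simpa [image_div_Ioo_zero_one hx] using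
    lintegral_image_eq_lintegral_deriv_mul_of_antitoneOn measurableSet_Ioo hderiv hanti g

theorem div_sq_mul_div_rpow_mul_div_sub_rpow {x z : ℝ} (t q : ℝ) (hx : 0 < x)
    (hz : z ∈ Ioo (0 : ℝ) 1) :
    x / z ^ 2 * ((x / z) ^ t * (x / z - x) ^ (q - 1)) =
      x ^ (t + q) * (z ^ (-(t + q) - 1) * (1 - z) ^ (q - 1)) := by
  obtain ⟨hz0, hz1⟩ := hz
  have hsub : x / z - x = x * (1 - z) / z := by field_simp
  have hxpow : x ^ (t + q) = x * x ^ t * x ^ (q - 1) := by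
    rw [mul_assoc, ← rpow_add hx, mul_comm, ← rpow_add_one hx.ne']
    ring_nf
  have hzpow : z ^ (-(t + q) - 1) = (z ^ 2 * z ^ t * z ^ (q - 1))⁻¹ := by
    rw [← rpow_two, ← rpow_add hz0, ← rpow_add hz0, ← rpow_neg hz0.le]
    ring_nf
  rw [hsub, div_rpow (by positivity) hz0.le, div_rpow (mul_pos hx (sub_pos.2 hz1)).le hz0.le,
    mul_rpow hx.le (sub_pos.2 hz1).le, hxpow, hzpow]
  field_simp

theorem lintegral_Ioi_rpow_mul_sub_rpow {t q x : ℝ} (hq : 0 < q) (ht : t + q < 0) (hx : 0 < x) :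
    ∫⁻ y in Ioi x, ENNReal.ofReal (y ^ t * (y - x) ^ (q - 1)) =
      ENNReal.ofReal (beta (-(t + q)) q * x ^ (t + q)) := by
  calc ∫⁻ y in Ioi x, ENNReal.ofReal (y ^ t * (y - x) ^ (q - 1))
    _ = ∫⁻ z in Ioo (0 : ℝ) 1, ENNReal.ofReal (x ^ (t + q)) *
          ENNReal.ofReal (z ^ (-(t + q) - 1) * (1 - z) ^ (q - 1)) := by
      rw [lintegral_Ioi_eq_lintegral_Ioo_div hx]
      refine setLIntegral_congr_fun measurableSet_Ioo fun z hz ↦ ?_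
      have hz0 : 0 < z := hz.1
      simp only [← ENNReal.ofReal_mul (show 0 ≤ x / z ^ 2 by positivity),
        ← ENNReal.ofReal_mul (rpow_nonneg hx.le (t + q)),
        div_sq_mul_div_rpow_mul_div_sub_rpow t q hx hz]
    _ = ENNReal.ofReal (beta (-(t + q)) q * x ^ (t + q)) := by
      rw [lintegral_const_mul' _ _ ENNReal.ofReal_ne_top,
        lintegral_Ioo_rpow_mul_one_sub_rpow (neg_pos.2 ht) hq,
        ← ENNReal.ofReal_mul (rpow_nonneg hx.le _), mul_comm]

end PowerIntegrals

/-- The Riesz kernel `|x - y| ^ r` on the half-line, weighted by the powers `x ^ s` and `y ^ t`.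
After the shift by `α`, this is the integrand of the second moment, with `s = t = h - 1` and
`r = 2 * d - 1`. -/
noncomputable def weightedRieszKernel (s t r x y : ℝ) : ℝ :=
  x ^ s * y ^ t * |x - y| ^ r

namespace weightedRieszKernel

variable {s t q r c x y : ℝ}

theorem swap (s t r x y : ℝ) : weightedRieszKernel s t r x y = weightedRieszKernel t s r y x := by
  rw [weightedRieszKernel, weightedRieszKernel, mul_comm (x ^ s), abs_sub_comm]

theorem nonneg (hx : 0 ≤ x) (hy : 0 ≤ y) : 0 ≤ weightedRieszKernel s t r x y := by
  unfold weightedRieszKernel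
  positivity

theorem measurable_uncurry (s t r : ℝ) :
    Measurable fun p : ℝ × ℝ ↦ weightedRieszKernel s t r p.1 p.2 := by
  unfold weightedRieszKernel
  fun_prop

theorem lintegral_Ioi (hq : 0 < q) (ht : t + q < 0) (hx : 0 < x) :
    ∫⁻ y in Ioi x, ENNReal.ofReal (weightedRieszKernel s t (q - 1) x y) =
      ENNReal.ofReal (beta (-(t + q)) q) * ENNReal.ofReal (x ^ (s + t + q)) := by
  have hkernel : ∀ y ∈ Ioi x, ENNReal.ofReal (weightedRieszKernel s t (q - 1) x y) =
      ENNReal.ofReal (x ^ s) * ENNReal.ofReal (y ^ t * (y - x) ^ (q - 1)) := fun y hy ↦ by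
    rw [weightedRieszKernel, abs_sub_comm, abs_of_pos (sub_pos.2 hy), mul_assoc,
      ENNReal.ofReal_mul (rpow_nonneg hx.le s)]
  have hbeta := (beta_pos (neg_pos.2 ht) hq).le
  rw [setLIntegral_congr_fun measurableSet_Ioi hkernel,
    lintegral_const_mul' _ _ ENNReal.ofReal_ne_top, lintegral_Ioi_rpow_mul_sub_rpow hq ht hx,
    ENNReal.ofReal_mul hbeta, mul_left_comm, ← ENNReal.ofReal_mul (rpow_nonneg hx.le s),
    ← rpow_add hx, add_assoc]

theorem lintegral_triangle (hq : 0 < q) (ht : t + q < 0) (hst : s + t + q < -1) (hc : 0 < c) :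
    ∫⁻ x in Ioi c, ∫⁻ y in Ioi x, ENNReal.ofReal (weightedRieszKernel s t (q - 1) x y) =
      ENNReal.ofReal (beta (-(t + q)) q * (-c ^ (s + t + q + 1) / (s + t + q + 1))) := by
  rw [setLIntegral_congr_fun measurableSet_Ioi fun x hx ↦ lintegral_Ioi hq ht (hc.trans hx),
    lintegral_const_mul' _ _ ENNReal.ofReal_ne_top, lintegral_Ioi_rpow_of_lt hst hc,
    ← ENNReal.ofReal_mul (beta_pos (neg_pos.2 ht) hq).le]

theorem lintegral_quadrant (hq : 0 < q) (hs : s + q < 0) (ht : t + q < 0)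
    (hst : s + t + q < -1) (hc : 0 < c) :
    ∫⁻ p in Ioi c ×ˢ Ioi c, ENNReal.ofReal (weightedRieszKernel s t (q - 1) p.1 p.2) =
      ENNReal.ofReal ((beta (-(s + q)) q + beta (-(t + q)) q) *
        (-c ^ (s + t + q + 1) / (s + t + q + 1))) := by
  have hmeas := (measurable_uncurry s t (q - 1)).ennreal_ofReal
  have hIoi (F : ℝ → ℝ → ENNReal) :
      ∫⁻ x in Ioi c, ∫⁻ y in Ioi x, F x y ∂volume.restrict (Ioi c) =
        ∫⁻ x in Ioi c, ∫⁻ y in Ioi x, F x y :=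
    setLIntegral_congr_fun measurableSet_Ioi fun x hx ↦ by
      rw [Measure.restrict_restrict_of_subset (Ioi_subset_Ioi (le_of_lt hx))]
  have hpow : 0 ≤ -c ^ (s + t + q + 1) / (s + t + q + 1) :=
    div_nonneg_of_nonpos (neg_nonpos.2 (rpow_nonneg hc.le _)) (by linarith)
  rw [Measure.volume_eq_prod, setLIntegral_prod _ hmeas.aemeasurable,
    lintegral_lintegral_eq_add_lintegral_Ioi hmeas.aemeasurable, hIoi, hIoi,
    lintegral_triangle hq ht hst hc]
  simp_rw [swap s t]
  rw [lintegral_triangle hq hs (by linarith) hc, add_comm t s, ← ENNReal.ofReal_add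
    (mul_nonneg (beta_pos (neg_pos.2 ht) hq).le hpow)
    (mul_nonneg (beta_pos (neg_pos.2 hs) hq).le hpow), ← add_mul, add_comm (beta _ _)]

theorem integrableOn_and_setIntegral_quadrant (hq : 0 < q) (hs : s + q < 0) (ht : t + q < 0)
    (hst : s + t + q < -1) (hc : 0 < c) :
    IntegrableOn (fun p : ℝ × ℝ ↦ weightedRieszKernel s t (q - 1) p.1 p.2) (Ioi c ×ˢ Ioi c) ∧
    ∫ p in Ioi c ×ˢ Ioi c, weightedRieszKernel s t (q - 1) p.1 p.2 =
      (beta (-(s + q)) q + beta (-(t + q)) q) * (-c ^ (s + t + q + 1) / (s + t + q + 1)) := by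
  refine integrable_and_integral_eq_of_lintegral_ofReal_eq
    (measurable_uncurry s t (q - 1)).aestronglyMeasurable ?_ ?_
    (lintegral_quadrant hq hs ht hst hc)
  · filter_upwards [self_mem_ae_restrict (measurableSet_Ioi.prod measurableSet_Ioi)] with p hp
    exact nonneg (hc.trans hp.1).le (hc.trans hp.2).le
  · exact mul_nonneg
      (add_pos (beta_pos (neg_pos.2 hs) hq) (beta_pos (neg_pos.2 ht) hq)).le
      (div_nonneg_of_nonpos (neg_nonpos.2 (rpow_nonneg hc.le _)) (by linarith))

end weightedRieszKernel

section Translation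

variable {E : Type*} [NormedAddCommGroup E] (f : ℝ → ℝ → E) (c : ℝ)

theorem preimage_add_right_Ioi_prod_Ioi :
    (· + (c, c)) ⁻¹' (Ioi c ×ˢ Ioi c) = Ioi (0 : ℝ) ×ˢ Ioi (0 : ℝ) := by
  ext p
  simp

theorem integrableOn_quadrant_comp_add_right_iff :
    IntegrableOn (fun p : ℝ × ℝ ↦ f (p.1 + c) (p.2 + c)) (Ioi 0 ×ˢ Ioi 0) ↔
      IntegrableOn (fun p : ℝ × ℝ ↦ f p.1 p.2) (Ioi c ×ˢ Ioi c) := by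
  rw [← preimage_add_right_Ioi_prod_Ioi c]
  exact (measurePreserving_add_right volume (c, c)).integrableOn_comp_preimage
    (f := fun p ↦ f p.1 p.2) (measurableEmbedding_addRight (c, c))

theorem setIntegral_quadrant_comp_add_right [NormedSpace ℝ E] :
    ∫ p in Ioi (0 : ℝ) ×ˢ Ioi (0 : ℝ), f (p.1 + c) (p.2 + c) =
      ∫ p in Ioi c ×ˢ Ioi c, f p.1 p.2 := by
  rw [← preimage_add_right_Ioi_prod_Ioi c]
  exact (measurePreserving_add_right volume (c, c)).setIntegral_preimage_emb
    (measurableEmbedding_addRight (c, c)) (fun p ↦ f p.1 p.2) _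

end Translation

theorem one_add_div_rpow {α u : ℝ} (hα : 0 < α) (hu : 0 ≤ u + α) (s : ℝ) :
    (1 + u / α) ^ s = α ^ (-s) * (u + α) ^ s := by
  rw [one_add_div hα.ne', add_comm, div_rpow hu hα.le, rpow_neg hα.le, div_eq_inv_mul]

theorem gamma_mixed_flou_integrand_eq {d h₁ h₂ α u v : ℝ} (hα : 0 < α) (hu : 0 ≤ u + α)
    (hv : 0 ≤ v + α) :
    (1 + u / α) ^ (h₁ - 1) * (1 + v / α) ^ (h₂ - 1) * |u - v| ^ (2 * d - 1) =
      α ^ (2 - h₁ - h₂) *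
        weightedRieszKernel (h₁ - 1) (h₂ - 1) (2 * d - 1) (u + α) (v + α) := by
  have hpow : α ^ (2 - h₁ - h₂) = α ^ (-(h₁ - 1)) * α ^ (-(h₂ - 1)) := by
    rw [← rpow_add hα]
    ring_nf
  rw [one_add_div_rpow hα hu, one_add_div_rpow hα hv, hpow, weightedRieszKernel,
    add_sub_add_right_eq_sub]
  ring

/-- For `d < 1 / 2` and up to the constant `C_d`, the integral is the cross moment of the
processes with parameters `h₁` and `h₂` driven by the same Lévy process. -/
theorem gamma_mixed_flou_second_moment_general {d h₁ h₂ α : ℝ} (hd : 0 < d)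
    (hh₁ : h₁ + 2 * d < 1) (hh₂ : h₂ + 2 * d < 1) (hh : h₁ + h₂ + 2 * d < 1) (hα : 0 < α) :
    IntegrableOn (fun p : ℝ × ℝ =>
        (1 + p.1 / α) ^ (h₁ - 1) * (1 + p.2 / α) ^ (h₂ - 1) * |p.1 - p.2| ^ (2 * d - 1))
      (Ioi (0 : ℝ) ×ˢ Ioi (0 : ℝ)) ∧
    ∫ u in Ioi (0 : ℝ), ∫ v in Ioi (0 : ℝ),
        (1 + u / α) ^ (h₁ - 1) * (1 + v / α) ^ (h₂ - 1) * |u - v| ^ (2 * d - 1) =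
      α ^ (2 * d + 1) * (beta (1 - h₁ - 2 * d) (2 * d) + beta (1 - h₂ - 2 * d) (2 * d)) /
        (1 - (h₁ + h₂ + 2 * d)) := by
  have hmeas : MeasurableSet (Ioi (0 : ℝ) ×ˢ Ioi (0 : ℝ)) :=
    measurableSet_Ioi.prod measurableSet_Ioi
  have hshift : EqOn _ _ (Ioi (0 : ℝ) ×ˢ Ioi (0 : ℝ)) := fun p hp ↦
    gamma_mixed_flou_integrand_eq (d := d) (h₁ := h₁) (h₂ := h₂) hα
      (add_pos hp.1 hα).le (add_pos hp.2 hα).le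
  obtain ⟨hint, heq⟩ := weightedRieszKernel.integrableOn_and_setIntegral_quadrant
    (s := h₁ - 1) (t := h₂ - 1) (q := 2 * d) (by linarith) (by linarith) (by linarith)
    (by linarith) hα
  have hintegrable := (integrableOn_congr_fun hshift hmeas).2
    (((integrableOn_quadrant_comp_add_right_iff _ α).2 hint).const_mul (α ^ (2 - h₁ - h₂)))
  refine ⟨hintegrable, ?_⟩
  have hpow : α ^ (2 * d + 1) =
      α ^ (2 - h₁ - h₂) * α ^ (h₁ - 1 + (h₂ - 1) + 2 * d + 1) := by
    rw [← rpow_add hα]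
    ring_nf
  rw [← setIntegral_prod _ hintegrable, ← Measure.volume_eq_prod,
    setIntegral_congr_fun hmeas hshift, integral_const_mul,
    setIntegral_quadrant_comp_add_right _ α, heq, hpow, neg_div, ← div_neg]
  ring_nf

/-- for `d ∈ (0,1/2)`, `0 < h < 1/2 − d` and `α > 0`, the function
`(u,v) ↦ (1+u/α)^{h−1}(1+v/α)^{h−1}|u−v|^{2d−1}` is integrable on `(0,∞)²` and its integral
equals `2 α^{2d+1} B(1−h−2d, 2d) / (1 − 2(h+d))`, where `B(x,y) = Γ(x)Γ(y)/Γ(x+y)` is the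
Beta function. -/
theorem gamma_mixed_flou_second_moment (d h α : ℝ) (hd0 : 0 < d) (hd2 : d < 1 / 2)
    (hh0 : 0 < h) (hh : h < 1 / 2 - d) (hα : 0 < α) :
    IntegrableOn (fun p : ℝ × ℝ =>
        (1 + p.1 / α) ^ (h - 1) * (1 + p.2 / α) ^ (h - 1) * |p.1 - p.2| ^ (2 * d - 1))
      (Ioi (0 : ℝ) ×ˢ Ioi (0 : ℝ)) ∧
    ∫ u in Ioi (0 : ℝ), ∫ v in Ioi (0 : ℝ),
        (1 + u / α) ^ (h - 1) * (1 + v / α) ^ (h - 1) * |u - v| ^ (2 * d - 1) =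
      2 * α ^ (2 * d + 1) *
          (Real.Gamma (1 - h - 2 * d) * Real.Gamma (2 * d) /
            Real.Gamma ((1 - h - 2 * d) + 2 * d)) / (1 - 2 * (h + d)) := by
  obtain ⟨hint, heq⟩ := gamma_mixed_flou_second_moment_general (h₁ := h) (h₂ := h) hd0
    (by linarith) (by linarith) (by linarith) hα
  exact ⟨hint, heq.trans (by unfold beta; ring)⟩
end

section
/- Let d ∈ (0,1/2), let λ₁ < 0 and λ₂ < 0 be real numbers, and let T > 0. Then (1 − e^{λ₁ T})(1 − e^{λ₂ T}) ∫_0^∞ ∫_0^∞ e^{λ₁ u + λ₂ v} |u − v|^{2d−1} du dv ≤ T² Γ(2d) (−λ₁)(−λ₂) ((−λ₁)^{−2d} + (−λ₂)^{−2d}) / ((−λ₁) + (−λ₂)). -/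
open MeasureTheory Real Set

/-!
In the coordinates `w = u - v` and `v` the open quadrant becomes `v > w⁻`. Integrating out `v`
turns the double integral of `exp (-(a u + b v)) k(u - v)` into `(a + b)⁻¹` times the Laplace
transforms of the two halves of `k`; for `k w = |w| ^ (s - 1)` these are Gamma integrals. The double
integral is thus known exactly, and the inequality only comes from `1 - exp (l T) ≤ -l T`.
-/

section Lebesgue

variable {a b s : ℝ}

lemma lintegral_lintegral_Ioi_eq_shear {f : ℝ → ℝ → ENNReal}
    (hf : Measurable (Function.uncurry f)) :
    ∫⁻ v in Ioi 0, ∫⁻ u in Ioi 0, f u v = ∫⁻ w, ∫⁻ v in Ioi w⁻, f (w + v) v := by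
  let F : ℝ × ℝ → ENNReal := (Ioi 0 ×ˢ Ioi 0).indicator (Function.uncurry f)
  have hF : Measurable F := hf.indicator (measurableSet_Ioi.prod measurableSet_Ioi)
  have hF_sheared : Measurable (Function.uncurry fun v w ↦ F (w + v, v)) :=
    hF.comp (measurable_snd.add measurable_fst |>.prodMk measurable_fst)
  have quadrant (v : ℝ) :
      ∫⁻ u, F (u, v) = (Ioi (0 : ℝ)).indicator (fun v ↦ ∫⁻ u in Ioi 0, f u v) v := by
    by_cases hv : 0 < v <;> simp [F, indicator, hv, ← lintegral_indicator measurableSet_Ioi]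
  have sheared (w v : ℝ) : F (w + v, v) = (Ioi w⁻).indicator (fun v ↦ f (w + v) v) v := by
    have hmem : 0 < w + v ∧ 0 < v ↔ w⁻ < v := by
      rw [negPart_def, sup_lt_iff, neg_lt_iff_pos_add']
    simp [F, indicator, hmem]
  calc
    _ = ∫⁻ v, ∫⁻ u, F (u, v) := by simp_rw [quadrant, lintegral_indicator measurableSet_Ioi]
    _ = ∫⁻ v, ∫⁻ w, F (w + v, v) := by
      congr! 2 with v
      exact (lintegral_add_right_eq_self (fun u ↦ F (u, v)) v).symm
    _ = ∫⁻ w, ∫⁻ v, F (w + v, v) := lintegral_lintegral_swap hF_sheared.aemeasurable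
    _ = _ := by simp_rw [sheared, lintegral_indicator measurableSet_Ioi]

lemma lintegral_eq_lintegral_Ioi_add_lintegral_Ioi_comp_neg (f : ℝ → ENNReal) :
    ∫⁻ w, f w = (∫⁻ w in Ioi 0, f w) + ∫⁻ w in Ioi 0, f (-w) := by
  have hneg : ∫⁻ w in Ioi 0, f (-w) = ∫⁻ w in Iio 0, f w := by
    simpa using (Measure.measurePreserving_neg (volume : Measure ℝ)).setLIntegral_comp_preimage_emb
      (MeasurableEquiv.neg ℝ).measurableEmbedding f (Iio 0)
  rw [hneg, ← lintegral_add_compl f measurableSet_Ioi, compl_Ioi, setLIntegral_congr Iio_ae_eq_Iic]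

lemma lintegral_exp_neg_mul_Ioi (ha : 0 < a) (c : ℝ) :
    ∫⁻ v in Ioi c, ENNReal.ofReal (exp (-(a * v))) = ENNReal.ofReal (exp (-(a * c)) * a⁻¹) := by
  have hint : IntegrableOn (fun v ↦ exp (-(a * v))) (Ioi c) := by
    simpa only [neg_mul] using integrableOn_exp_mul_Ioi (neg_lt_zero.2 ha) c
  have hval : ∫ v in Ioi c, exp (-(a * v)) = exp (-(a * c)) * a⁻¹ := by
    simpa only [neg_mul, neg_div_neg_eq, ← div_eq_mul_inv] using
      integral_exp_mul_Ioi (neg_lt_zero.2 ha) c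
  rw [← hval, ofReal_integral_eq_lintegral_ofReal hint (ae_of_all _ fun _ ↦ (exp_pos _).le)]

lemma lintegral_exp_neg_mul_diagonal (hab : 0 < a + b) (w : ℝ) :
    ∫⁻ v in Ioi w⁻, ENNReal.ofReal (exp (-(a * (w + v) + b * v))) =
      ENNReal.ofReal (exp (-(a * w⁺ + b * w⁻))) * ENNReal.ofReal (a + b)⁻¹ := by
  have hfactor (v : ℝ) : ENNReal.ofReal (exp (-(a * (w + v) + b * v))) =
      ENNReal.ofReal (exp (-(a * w))) * ENNReal.ofReal (exp (-((a + b) * v))) := by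
    rw [← ENNReal.ofReal_mul (exp_pos _).le, ← exp_add]
    ring_nf
  have hparts : -(a * w) + -((a + b) * w⁻) = -(a * w⁺ + b * w⁻) := by
    linear_combination a * posPart_sub_negPart w
  simp_rw [hfactor]
  rw [lintegral_const_mul _ (by fun_prop), lintegral_exp_neg_mul_Ioi hab,
    ENNReal.ofReal_mul (exp_pos _).le, ← mul_assoc, ← ENNReal.ofReal_mul (exp_pos _).le,
    ← exp_add, hparts]

lemma lintegral_lintegral_exp_neg_mul_comp_sub (hab : 0 < a + b) {k : ℝ → ENNReal}
    (hk : Measurable k) :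
    ∫⁻ v in Ioi 0, ∫⁻ u in Ioi 0, ENNReal.ofReal (exp (-(a * u + b * v))) * k (u - v) =
      ((∫⁻ w in Ioi 0, ENNReal.ofReal (exp (-(a * w))) * k w) +
        ∫⁻ w in Ioi 0, ENNReal.ofReal (exp (-(b * w))) * k (-w)) * ENNReal.ofReal (a + b)⁻¹ := by
  have hdiagonal (w : ℝ) :
      ∫⁻ v in Ioi w⁻, ENNReal.ofReal (exp (-(a * (w + v) + b * v))) * k (w + v - v) =
        ENNReal.ofReal (exp (-(a * w⁺ + b * w⁻))) * k w * ENNReal.ofReal (a + b)⁻¹ := by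
    simp_rw [add_sub_cancel_right]
    rw [lintegral_mul_const _ (by fun_prop), lintegral_exp_neg_mul_diagonal hab, mul_right_comm]
  have hpos : ∀ w ∈ Ioi (0 : ℝ), ENNReal.ofReal (exp (-(a * w⁺ + b * w⁻))) * k w =
      ENNReal.ofReal (exp (-(a * w))) * k w := fun w (hw : 0 < w) ↦ by
    simp [posPart_of_nonneg hw.le, negPart_of_nonneg hw.le]
  have hneg : ∀ w ∈ Ioi (0 : ℝ), ENNReal.ofReal (exp (-(a * (-w)⁺ + b * (-w)⁻))) * k (-w) =
      ENNReal.ofReal (exp (-(b * w))) * k (-w) := fun w (hw : 0 < w) ↦ by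
    simp [posPart_of_nonneg hw.le, negPart_of_nonneg hw.le]
  rw [lintegral_lintegral_Ioi_eq_shear (by fun_prop)]
  simp_rw [hdiagonal]
  rw [lintegral_mul_const _ (by fun_prop), lintegral_eq_lintegral_Ioi_add_lintegral_Ioi_comp_neg,
    setLIntegral_congr_fun measurableSet_Ioi hpos, setLIntegral_congr_fun measurableSet_Ioi hneg]

lemma lintegral_exp_neg_mul_abs_rpow_Ioi (hs : 0 < s) (ha : 0 < a) :
    ∫⁻ w in Ioi 0, ENNReal.ofReal (exp (-(a * w))) * ENNReal.ofReal (|w| ^ (s - 1)) =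
      ENNReal.ofReal (Gamma s * a ^ (-s)) := by
  have hval : ∫ w in Ioi 0, w ^ (s - 1) * exp (-(a * w)) = Gamma s * a ^ (-s) := by
    rw [integral_rpow_mul_exp_neg_mul_Ioi hs ha, one_div, inv_rpow ha.le, rpow_neg ha.le, mul_comm]
  have hint : IntegrableOn (fun w ↦ w ^ (s - 1) * exp (-(a * w))) (Ioi 0) :=
    Integrable.of_integral_ne_zero <| by
      rw [hval]
      exact (mul_pos (Gamma_pos_of_pos hs) (rpow_pos_of_pos ha _)).ne'
  have hnonneg : ∀ w ∈ Ioi (0 : ℝ), 0 ≤ w ^ (s - 1) * exp (-(a * w)) := fun w (hw : 0 < w) ↦ by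
    positivity
  rw [← hval, ofReal_integral_eq_lintegral_ofReal hint
    (ae_restrict_of_forall_mem measurableSet_Ioi hnonneg)]
  refine setLIntegral_congr_fun measurableSet_Ioi fun w (hw : 0 < w) ↦ ?_
  rw [abs_of_pos hw, ← ENNReal.ofReal_mul (exp_pos _).le, mul_comm]

end Lebesgue

lemma integral_integral_eq_of_lintegral_lintegral_eq_ofReal {α β : Type*} [MeasurableSpace α]
    [MeasurableSpace β] {μ : Measure α} {ν : Measure β} [SFinite μ] [SFinite ν] {f : α → β → ℝ}
    (hf : Measurable (Function.uncurry f)) (hf0 : ∀ x y, 0 ≤ f x y) {c : ℝ} (hc : 0 ≤ c)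
    (h : ∫⁻ x, ∫⁻ y, ENNReal.ofReal (f x y) ∂ν ∂μ = ENNReal.ofReal c) :
    ∫ x, ∫ y, f x y ∂ν ∂μ = c := by
  have hprod : ∫⁻ z, ENNReal.ofReal (Function.uncurry f z) ∂μ.prod ν = ENNReal.ofReal c := by
    rw [lintegral_prod _ hf.ennreal_ofReal.aemeasurable, ← h]
    rfl
  have hf0' : 0 ≤ᵐ[μ.prod ν] Function.uncurry f := ae_of_all _ fun z ↦ hf0 z.1 z.2
  have hint : Integrable (Function.uncurry f) (μ.prod ν) :=
    (lintegral_ofReal_ne_top_iff_integrable hf.aestronglyMeasurable hf0').1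
      (hprod ▸ ENNReal.ofReal_ne_top)
  calc
    ∫ x, ∫ y, f x y ∂ν ∂μ = ∫ z, Function.uncurry f z ∂μ.prod ν := integral_integral hint
    _ = (∫⁻ z, ENNReal.ofReal (Function.uncurry f z) ∂μ.prod ν).toReal :=
      integral_eq_lintegral_of_nonneg_ae hf0' hf.aestronglyMeasurable
    _ = c := by rw [hprod, ENNReal.toReal_ofReal hc]

theorem integral_integral_exp_neg_mul_abs_sub_rpow {a b s : ℝ} (hs : 0 < s) (ha : 0 < a)
    (hb : 0 < b) :
    ∫ v in Ioi 0, ∫ u in Ioi 0, exp (-(a * u + b * v)) * |u - v| ^ (s - 1) =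
      Gamma s * (a ^ (-s) + b ^ (-s)) / (a + b) := by
  refine integral_integral_eq_of_lintegral_lintegral_eq_ofReal (by fun_prop)
    (fun v u ↦ by positivity) (by positivity) ?_
  simp_rw [ENNReal.ofReal_mul (exp_pos _).le]
  rw [lintegral_lintegral_exp_neg_mul_comp_sub (k := fun w ↦ ENNReal.ofReal (|w| ^ (s - 1)))
    (add_pos ha hb) (by fun_prop)]
  simp_rw [abs_neg]
  rw [lintegral_exp_neg_mul_abs_rpow_Ioi hs ha, lintegral_exp_neg_mul_abs_rpow_Ioi hs hb,
    ← ENNReal.ofReal_add (by positivity) (by positivity), ← ENNReal.ofReal_mul (by positivity),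
    ← mul_add, div_eq_mul_inv]

lemma one_sub_exp_mul_one_sub_exp_le {x y : ℝ} (hx : x ≤ 0) (hy : y ≤ 0) :
    (1 - exp x) * (1 - exp y) ≤ x * y := by
  have one_sub_exp_le (z : ℝ) : 1 - exp z ≤ -z := by linarith [add_one_le_exp z]
  rw [← neg_mul_neg x y]
  exact mul_le_mul (one_sub_exp_le x) (one_sub_exp_le y) (sub_nonneg.2 (exp_le_one_iff.2 hy))
    (neg_nonneg.2 hx)

theorem tightness_I1_bound_general (d l₁ l₂ T : ℝ) (hd : 0 < d) (hl₁ : l₁ < 0) (hl₂ : l₂ < 0)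
    (hT : 0 ≤ T) :
    (1 - exp (l₁ * T)) * (1 - exp (l₂ * T)) *
        ∫ v in Ioi (0 : ℝ), ∫ u in Ioi (0 : ℝ), exp (l₁ * u + l₂ * v) * |u - v| ^ (2 * d - 1) ≤
      T ^ 2 * Gamma (2 * d) * (-l₁) * (-l₂) *
          ((-l₁) ^ (-(2 * d)) + (-l₂) ^ (-(2 * d))) / ((-l₁) + (-l₂)) := by
  have hprefactor := one_sub_exp_mul_one_sub_exp_le (mul_nonpos_of_nonpos_of_nonneg hl₁.le hT)
    (mul_nonpos_of_nonpos_of_nonneg hl₂.le hT)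
  have hintegral := integral_integral_exp_neg_mul_abs_sub_rpow (mul_pos two_pos hd)
    (neg_pos.2 hl₁) (neg_pos.2 hl₂)
  simp only [neg_mul, ← neg_add, neg_neg] at hintegral
  calc
    _ ≤ l₁ * T * (l₂ * T) * ∫ v in Ioi (0 : ℝ), ∫ u in Ioi (0 : ℝ),
          exp (l₁ * u + l₂ * v) * |u - v| ^ (2 * d - 1) := by
      gcongr
    _ = _ := by
      rw [hintegral]
      ring

/-- deterministic estimate for the tightness term `I₁`: for `d ∈ (0,1/2)`,
`λ₁, λ₂ < 0` and `T > 0`,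
`(1−e^{λ₁T})(1−e^{λ₂T}) ∫_0^∞∫_0^∞ e^{λ₁u+λ₂v}|u−v|^{2d−1} du dv
  ≤ T² Γ(2d) (−λ₁)(−λ₂)((−λ₁)^{−2d} + (−λ₂)^{−2d}) / ((−λ₁)+(−λ₂))`. -/
theorem tightness_I1_bound (d l₁ l₂ T : ℝ) (hd0 : 0 < d) (hd2 : d < 1 / 2)
    (hl₁ : l₁ < 0) (hl₂ : l₂ < 0) (hT : 0 < T) :
    (1 - Real.exp (l₁ * T)) * (1 - Real.exp (l₂ * T)) *
        ∫ v in Ioi (0 : ℝ), ∫ u in Ioi (0 : ℝ),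
          Real.exp (l₁ * u + l₂ * v) * |u - v| ^ (2 * d - 1) ≤
      T ^ 2 * Real.Gamma (2 * d) * (-l₁) * (-l₂) *
          ((-l₁) ^ (-(2 * d)) + (-l₂) ^ (-(2 * d))) / ((-l₁) + (-l₂)) :=
  tightness_I1_bound_general d l₁ l₂ T hd0 hl₁ hl₂ hT.le
end

section
/- Let d ∈ (0,1/2), h ∈ (0, 1/2 − d), and α > 0. Then lim_{t→∞} t^{1−2h−2d} ∫_{−∞}^0 ∫_{−∞}^t (α + t − u)^{h−1} (α − v)^{h−1} |u − v|^{2d−1} du dv = ∫_{−∞}^0 ∫_{−∞}^1 (1 − y)^{h−1} (−x)^{h−1} |x − y|^{2d−1} dy dx. -/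
open MeasureTheory Real Set Filter Topology

/-!
Substituting `u = t (1 - s)`, `v = -t w` pulls out of the double integral the power of `t` dictated
by homogeneity and replaces the parameter `α` by `α / t → 0`, so the claim is continuity at `0` of
the rescaled integral as a function of that parameter. The rescaled integrand decreases in the
parameter, hence its value at `0` dominates. Integrability at `0` is one question asked twice: by
homogeneity the inner integral `∫ s ^ p * |s - c| ^ r`, with `c = 1 + w`, is a multiple of
`c ^ (p + r + 1)`, so the outer integrand `w ^ q * (1 + w) ^ (p + r + 1)` has the same shape.
-/

open Asymptotics

theorem locallyIntegrable_abs_sub_rpow (c : ℝ) {r : ℝ} (hr : -1 < r) :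
    LocallyIntegrable fun s : ℝ => |s - c| ^ r := by
  have hcentred : LocallyIntegrable fun s : ℝ => |s| ^ r := by
    refine locallyIntegrable_of_norm_le_rpow (C := 1) (α := -r) (by simp)
      (by simpa using neg_lt.2 hr) (.of_forall fun s => ?_)
      (by fun_prop : Measurable fun s : ℝ => |s| ^ r).aestronglyMeasurable
    rw [neg_neg, one_mul, norm_eq_abs, norm_eq_abs, abs_of_nonneg (rpow_nonneg (abs_nonneg s) r)]
  rw [← (measurePreserving_sub_right volume c).map_eq] at hcentred
  exact (locallyIntegrable_map_homeomorph (Homeomorph.subRight c)).1 hcentred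

theorem isBigO_abs_sub_rpow_atTop (c r : ℝ) :
    (fun s : ℝ => |s - c| ^ r) =O[atTop] fun s => s ^ r := by
  have hequiv : (fun s : ℝ => s - c) ~[atTop] id :=
    IsEquivalent.refl.sub_isLittleO (isLittleO_const_id_atTop c)
  exact ((IsTheta.norm_left hequiv.isTheta).rpow (.of_forall fun s => norm_nonneg _)
    (eventually_ge_atTop 0)).isBigO

theorem integrableOn_Ioi_rpow_mul_abs_sub_rpow {c p r : ℝ} (hp : -1 < p) (hr : -1 < r)
    (hpr : p + r < -1) (hc : c ≠ 0) : IntegrableOn (fun s : ℝ => s ^ p * |s - c| ^ r) (Ioi 0) := by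
  have hbounded : (fun s : ℝ => |s - c| ^ r) =O[𝓝[>] 0] fun s => s ^ (-(0 : ℝ)) := by
    have hcont : ContinuousAt (fun s : ℝ => |s - c| ^ r) 0 :=
      ContinuousAt.rpow_const (by fun_prop) (.inl (by simpa using hc))
    simpa using (hcont.tendsto.mono_left nhdsWithin_le_nhds).isBigO_one ℝ
  simpa using mellin_convergent_of_isBigO_scalar (a := -r) (b := 0) (s := p + 1)
    ((locallyIntegrable_abs_sub_rpow c hr).locallyIntegrableOn _)
    (by simpa using isBigO_abs_sub_rpow_atTop c r) (by linarith) hbounded (by linarith)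

theorem integral_Ioi_rpow_mul_abs_sub_rpow (p r : ℝ) {c : ℝ} (hc : 0 < c) :
    ∫ s in Ioi (0 : ℝ), s ^ p * |s - c| ^ r =
      c ^ (p + r + 1) * ∫ s in Ioi (0 : ℝ), s ^ p * |s - 1| ^ r := by
  have hhomogeneous : ∀ s ∈ Ioi (0 : ℝ),
      (c * s) ^ p * |c * s - c| ^ r = c ^ (p + r) * (s ^ p * |s - 1| ^ r) := by
    intro s (hs : 0 < s)
    rw [← mul_sub_one, abs_mul, abs_of_pos hc, mul_rpow hc.le hs.le,
      mul_rpow hc.le (abs_nonneg _), rpow_add hc]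
    ring
  calc ∫ s in Ioi (0 : ℝ), s ^ p * |s - c| ^ r
      = c * ∫ s in Ioi (0 : ℝ), (c * s) ^ p * |c * s - c| ^ r := by
        simpa using (integral_comp_mul_left_Ioi' (fun s => s ^ p * |s - c| ^ r) 0 hc).symm
    _ = c ^ (p + r + 1) * ∫ s in Ioi (0 : ℝ), s ^ p * |s - 1| ^ r := by
        rw [setIntegral_congr_fun measurableSet_Ioi hhomogeneous, integral_const_mul,
          rpow_add_one hc.ne']
        ring

theorem integral_Iio_eq_smul_integral_Ioi {E : Type*} [NormedAddCommGroup E] [NormedSpace ℝ E]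
    (f : ℝ → E) (c : ℝ) {t : ℝ} (ht : 0 < t) :
    ∫ u in Iio c, f u = t • ∫ s in Ioi (0 : ℝ), f (c - t * s) := by
  rw [integral_comp_mul_left_Ioi' (fun s : ℝ => f (c - s)) 0 ht, mul_zero,
    ← (Measure.measurePreserving_sub_left volume c).setIntegral_preimage_emb
      (Homeomorph.subLeft c).measurableEmbedding]
  simp

/-- The integrand of the covariance after the substitution `u = t (1 - z.2)`, `v = -t z.1`, up to
the power of `t` that homogeneity produces. The shift `a` stands for `α / t`, and the three powers
have independent exponents. -/
noncomputable def covarianceKernel (p q r a : ℝ) (z : ℝ × ℝ) : ℝ :=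
  (a + z.2) ^ p * (a + z.1) ^ q * |z.2 - (1 + z.1)| ^ r

namespace covarianceKernel

variable {p q r a : ℝ} {z : ℝ × ℝ}

theorem measurable (p q r a : ℝ) : Measurable (covarianceKernel p q r a) := by
  unfold covarianceKernel; fun_prop

theorem nonneg (p q r : ℝ) (ha : 0 ≤ a) (hz : z ∈ Ioi (0 : ℝ) ×ˢ Ioi (0 : ℝ)) :
    0 ≤ covarianceKernel p q r a z := by
  obtain ⟨hz₁ : 0 < z.1, hz₂ : 0 < z.2⟩ := hz
  unfold covarianceKernel
  positivity

theorem antitoneOn_shift (hp : p ≤ 0) (hq : q ≤ 0) (r : ℝ)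
    (hz : z ∈ Ioi (0 : ℝ) ×ˢ Ioi (0 : ℝ)) :
    AntitoneOn (fun a => covarianceKernel p q r a z) (Ici 0) := by
  obtain ⟨hz₁ : 0 < z.1, hz₂ : 0 < z.2⟩ := hz
  intro a (ha : 0 ≤ a) b (hb : 0 ≤ b) hab
  have hpow₁ : (b + z.1) ^ q ≤ (a + z.1) ^ q :=
    rpow_le_rpow_of_nonpos (by positivity) (by gcongr) hq
  have hpow₂ : (b + z.2) ^ p ≤ (a + z.2) ^ p :=
    rpow_le_rpow_of_nonpos (by positivity) (by gcongr) hp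
  simp only [covarianceKernel]
  gcongr

theorem continuousOn_shift (p q r : ℝ) (hz : z ∈ Ioi (0 : ℝ) ×ˢ Ioi (0 : ℝ)) :
    ContinuousOn (fun a => covarianceKernel p q r a z) (Ici 0) := by
  obtain ⟨hz₁ : 0 < z.1, hz₂ : 0 < z.2⟩ := hz
  have hpow (k : ℝ) {x : ℝ} (hx : 0 < x) : ContinuousOn (fun a : ℝ => (a + x) ^ k) (Ici 0) :=
    ContinuousOn.rpow_const (by fun_prop) fun a (ha : 0 ≤ a) => .inl (by positivity)
  exact ((hpow p hz₂).mul (hpow q hz₁)).mul continuousOn_const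

theorem zero_shift_apply (p q r w s : ℝ) :
    covarianceKernel p q r 0 (w, s) = w ^ q * (s ^ p * |s - (1 + w)| ^ r) := by
  simp only [covarianceKernel, zero_add]
  ring

theorem integral_zero_shift_snd (p q r : ℝ) {w : ℝ} (hw : 0 < 1 + w) :
    ∫ s in Ioi (0 : ℝ), covarianceKernel p q r 0 (w, s) =
      w ^ q * (1 + w) ^ (p + r + 1) * ∫ s in Ioi (0 : ℝ), s ^ p * |s - 1| ^ r := by
  simp only [zero_shift_apply]
  rw [integral_const_mul, integral_Ioi_rpow_mul_abs_sub_rpow p r hw, mul_assoc]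

theorem integrableOn_zero_shift (hp : -1 < p) (hq : -1 < q) (hr : -1 < r) (hpqr : p + q + r < -2) :
    IntegrableOn (covarianceKernel p q r 0) (Ioi 0 ×ˢ Ioi 0) := by
  rw [IntegrableOn, Measure.volume_eq_prod, ← Measure.prod_restrict,
    integrable_prod_iff (measurable p q r 0).aestronglyMeasurable]
  constructor
  · filter_upwards [ae_restrict_mem measurableSet_Ioi] with w (hw : 0 < w)
    simp only [zero_shift_apply]
    exact (integrableOn_Ioi_rpow_mul_abs_sub_rpow hp hr (by linarith)
      (by positivity : 1 + w ≠ 0)).const_mul (w ^ q)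
  · have houter : IntegrableOn (fun w : ℝ => w ^ q * (1 + w) ^ (p + r + 1)) (Ioi 0) := by
      refine IntegrableOn.congr_fun (integrableOn_Ioi_rpow_mul_abs_sub_rpow (c := -1) hq
        (by linarith : -1 < p + r + 1) (by linarith) (by norm_num)) (fun w hw => ?_)
        measurableSet_Ioi
      rw [sub_neg_eq_add, add_comm w 1, abs_of_pos (add_pos one_pos hw)]
    refine IntegrableOn.congr_fun (houter.mul_const (∫ s in Ioi (0 : ℝ), s ^ p * |s - 1| ^ r))
      (fun w hw => ?_) measurableSet_Ioi
    rw [← integral_zero_shift_snd p q r (add_pos one_pos hw)]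
    exact setIntegral_congr_fun measurableSet_Ioi fun s hs =>
      (norm_of_nonneg (nonneg p q r le_rfl ⟨hw, hs⟩)).symm

theorem continuousOn_integral_shift (hp : -1 < p) (hq : -1 < q) (hr : -1 < r)
    (hpqr : p + q + r < -2) :
    ContinuousOn
      (fun a => ∫ w in Ioi (0 : ℝ), ∫ s in Ioi (0 : ℝ), covarianceKernel p q r a (w, s))
      (Ici 0) := by
  have hdominator := integrableOn_zero_shift hp hq hr hpqr
  have hbound : ∀ a ∈ Ici (0 : ℝ), ∀ᵐ z ∂volume.restrict (Ioi (0 : ℝ) ×ˢ Ioi (0 : ℝ)),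
      ‖covarianceKernel p q r a z‖ ≤ covarianceKernel p q r 0 z := fun a ha => by
    filter_upwards [ae_restrict_mem (measurableSet_Ioi.prod measurableSet_Ioi)] with z hz
    rw [norm_of_nonneg (nonneg p q r ha hz)]
    exact antitoneOn_shift (by linarith) (by linarith) r hz self_mem_Ici ha ha
  have hfubini : ∀ a ∈ Ici (0 : ℝ),
      ∫ w in Ioi (0 : ℝ), ∫ s in Ioi (0 : ℝ), covarianceKernel p q r a (w, s) =
        ∫ z in Ioi (0 : ℝ) ×ˢ Ioi (0 : ℝ), covarianceKernel p q r a z := fun a ha =>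
    (setIntegral_prod _
      (hdominator.mono' (measurable p q r a).aestronglyMeasurable (hbound a ha))).symm
  refine ContinuousOn.congr (continuousOn_of_dominated
    (fun a _ => (measurable p q r a).aestronglyMeasurable) hbound hdominator ?_) hfubini
  filter_upwards [ae_restrict_mem (measurableSet_Ioi.prod measurableSet_Ioi)] with z hz
  exact continuousOn_shift p q r hz

end covarianceKernel

theorem covariance_integrand_eq_rpow_mul_covarianceKernel (p q r : ℝ) {α t w s : ℝ} (hα : 0 ≤ α)
    (ht : 0 < t) (hw : 0 ≤ w) (hs : 0 ≤ s) :
    (α + t - (t - t * s)) ^ p * (α - (0 - t * w)) ^ q * |t - t * s - (0 - t * w)| ^ r =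
      t ^ (p + q + r) * covarianceKernel p q r (α / t) (w, s) := by
  have hu : α + t - (t - t * s) = t * (α / t + s) := by field_simp; ring
  have hv : α - (0 - t * w) = t * (α / t + w) := by field_simp; ring
  have hdist : |t - t * s - (0 - t * w)| = t * |s - (1 + w)| := by
    have hdiff : t - t * s - (0 - t * w) = -(t * (s - (1 + w))) := by ring
    rw [hdiff, abs_neg, abs_mul, abs_of_pos ht]
  rw [hu, hv, hdist, mul_rpow ht.le (by positivity), mul_rpow ht.le (by positivity),
    mul_rpow ht.le (abs_nonneg _), rpow_add ht, rpow_add ht, covarianceKernel]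
  ring

theorem integral_covariance_integrand_eq_rpow_mul (p q r : ℝ) {α t : ℝ} (hα : 0 ≤ α) (ht : 0 < t) :
    ∫ v in Iio (0 : ℝ), ∫ u in Iio t, (α + t - u) ^ p * (α - v) ^ q * |u - v| ^ r =
      t ^ (p + q + r + 2) *
        ∫ w in Ioi (0 : ℝ), ∫ s in Ioi (0 : ℝ), covarianceKernel p q r (α / t) (w, s) := by
  have hinner : ∀ w ∈ Ioi (0 : ℝ),
      ∫ u in Iio t, (α + t - u) ^ p * (α - (0 - t * w)) ^ q * |u - (0 - t * w)| ^ r =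
        t * t ^ (p + q + r) * ∫ s in Ioi (0 : ℝ), covarianceKernel p q r (α / t) (w, s) := by
    intro w (hw : 0 < w)
    rw [integral_Iio_eq_smul_integral_Ioi _ t ht, smul_eq_mul, mul_assoc,
      ← integral_const_mul (t ^ (p + q + r))]
    exact congrArg (t * ·) <| setIntegral_congr_fun measurableSet_Ioi fun s (hs : 0 < s) =>
      covariance_integrand_eq_rpow_mul_covarianceKernel p q r hα ht hw.le hs.le
  rw [integral_Iio_eq_smul_integral_Ioi _ 0 ht, smul_eq_mul,
    setIntegral_congr_fun measurableSet_Ioi hinner, integral_const_mul,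
    rpow_add ht _ 2, rpow_two]
  ring

theorem gamma_mixed_flou_covariance_asymptotics_general {p q r α : ℝ} (hp : -1 < p) (hq : -1 < q)
    (hr : -1 < r) (hpqr : p + q + r < -2) (hα : 0 ≤ α) :
    Tendsto (fun t : ℝ =>
        t ^ (-(p + q + r + 2)) *
          ∫ v in Iio (0 : ℝ), ∫ u in Iio t, (α + t - u) ^ p * (α - v) ^ q * |u - v| ^ r)
      atTop
      (𝓝 (∫ x in Iio (0 : ℝ), ∫ y in Iio (1 : ℝ), (1 - y) ^ p * (-x) ^ q * |x - y| ^ r)) := by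
  have hlimit : ∫ x in Iio (0 : ℝ), ∫ y in Iio (1 : ℝ), (1 - y) ^ p * (-x) ^ q * |x - y| ^ r =
      ∫ w in Ioi (0 : ℝ), ∫ s in Ioi (0 : ℝ), covarianceKernel p q r 0 (w, s) := by
    simpa [abs_sub_comm] using integral_covariance_integrand_eq_rpow_mul p q r le_rfl one_pos
  have hshift : Tendsto (fun t : ℝ => α / t) atTop (𝓝[≥] 0) :=
    tendsto_nhdsWithin_iff.2 ⟨tendsto_const_nhds.div_atTop tendsto_id,
      (eventually_ge_atTop 0).mono fun t ht => div_nonneg hα ht⟩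
  rw [hlimit]
  have hcontinuous := covarianceKernel.continuousOn_integral_shift hp hq hr hpqr 0 self_mem_Ici
  refine (hcontinuous.tendsto.comp hshift).congr' ?_
  filter_upwards [eventually_gt_atTop 0] with t ht
  rw [integral_covariance_integrand_eq_rpow_mul p q r hα ht, ← mul_assoc, ← rpow_add ht,
    neg_add_cancel, rpow_zero, one_mul, Function.comp_apply]

/-- long-memory asymptotics of the covariance of the Gamma mixed fractional
Lévy Ornstein–Uhlenbeck process: for `d ∈ (0,1/2)`, `h ∈ (0, 1/2−d)`, `α > 0`,
`t^{1−2h−2d} ∫_{−∞}^0 ∫_{−∞}^t (α+t−u)^{h−1}(α−v)^{h−1}|u−v|^{2d−1} du dv` converges, as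
`t → ∞`, to `∫_{−∞}^0 ∫_{−∞}^1 (1−y)^{h−1}(−x)^{h−1}|x−y|^{2d−1} dy dx`. -/
theorem gamma_mixed_flou_covariance_asymptotics (d h α : ℝ) (hd0 : 0 < d) (hd2 : d < 1 / 2)
    (hh0 : 0 < h) (hh : h < 1 / 2 - d) (hα : 0 < α) :
    Tendsto (fun t : ℝ =>
        t ^ (1 - 2 * h - 2 * d) *
          ∫ v in Iio (0 : ℝ), ∫ u in Iio t,
            (α + t - u) ^ (h - 1) * (α - v) ^ (h - 1) * |u - v| ^ (2 * d - 1))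
      atTop
      (𝓝 (∫ x in Iio (0 : ℝ), ∫ y in Iio (1 : ℝ),
            (1 - y) ^ (h - 1) * (-x) ^ (h - 1) * |x - y| ^ (2 * d - 1))) := by
  convert gamma_mixed_flou_covariance_asymptotics_general (p := h - 1) (q := h - 1)
    (r := 2 * d - 1) (by linarith) (by linarith) (by linarith) (by linarith) hα.le using 4
  ring
end

section
/- Let d ∈ (0,1/2) and h ∈ (0, 1/2 − d). Then the function (u,v) ↦ ((1−u)_+^h − (−u)_+^h)((1−v)_+^h − (−v)_+^h) |u − v|^{2d−1} is integrable on ℝ × ℝ; in particular ∫_ℝ ∫_ℝ ((1−u)_+^h − (−u)_+^h)((1−v)_+^h − (−v)_+^h) |u − v|^{2d−1} du dv is finite. -/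
open MeasureTheory Real

/-!
Up to a constant, the kernel `(1 - u)_+^h - (-u)_+^h` is at most `(2 - u)^(h - 1)` and it vanishes
for `u ≥ 1`. Reflecting `u ↦ 2 - u`, it suffices to integrate
`t^(h - 1) * s^(h - 1) * |t - s|^(2 * d - 1)` over `t, s > 1`, and by symmetry over `s ≤ t`.
Enlarging the range of `s` to `(0, t]` makes the inner integral a Beta integral: by homogeneity it
equals `t^(h + 2 * d - 1) * B(h, 2 * d)`. What is left is `∫ t^(2 * h + 2 * d - 2)` over `t > 1`,
which converges exactly when `h < 1 / 2 - d`.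
-/

open Set

section BetaIntegral

variable {a b t : ℝ}

lemma intervalIntegrable_rpow_mul_one_sub_rpow (ha : 0 < a) (hb : 0 < b) :
    IntervalIntegrable (fun x : ℝ => x ^ (a - 1) * (1 - x) ^ (b - 1)) volume 0 1 := by
  have hbeta := Complex.betaIntegral_convergent (u := a) (v := b) (by simpa) (by simpa)
  rw [intervalIntegrable_iff_integrableOn_Ioo_of_le zero_le_one] at hbeta ⊢
  refine IntegrableOn.congr_fun hbeta.norm (fun x ⟨hx0, hx1⟩ => ?_) measurableSet_Ioo
  have hsub : 1 - (x : ℂ) = ((1 - x : ℝ) : ℂ) := by push_cast; rfl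
  simp only [norm_mul, hsub, Complex.norm_cpow_eq_rpow_re_of_pos hx0,
    Complex.norm_cpow_eq_rpow_re_of_pos (sub_pos.2 hx1), Complex.sub_re, Complex.ofReal_re,
    Complex.one_re]

lemma mul_rpow_mul_sub_mul_rpow {x : ℝ} (ht : 0 < t) (hx : x ∈ Icc (0 : ℝ) 1) :
    (t * x) ^ (a - 1) * (t - t * x) ^ (b - 1) =
      t ^ (a + b - 2) * (x ^ (a - 1) * (1 - x) ^ (b - 1)) := by
  rw [← mul_one_sub, mul_rpow ht.le hx.1, mul_rpow ht.le (sub_nonneg.2 hx.2),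
    show a + b - 2 = (a - 1) + (b - 1) by ring, rpow_add ht]
  ring

lemma intervalIntegrable_rpow_mul_sub_rpow (ha : 0 < a) (hb : 0 < b) (ht : 0 < t) :
    IntervalIntegrable (fun s : ℝ => s ^ (a - 1) * (t - s) ^ (b - 1)) volume 0 t := by
  rw [← IntervalIntegrable.comp_mul_left_iff ht.ne', zero_div, div_self ht.ne']
  refine ((intervalIntegrable_rpow_mul_one_sub_rpow ha hb).const_mul (t ^ (a + b - 2))).congr
    fun x hx => ?_
  rw [uIoc_of_le zero_le_one] at hx
  exact (mul_rpow_mul_sub_mul_rpow ht (Ioc_subset_Icc_self hx)).symm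

lemma integral_rpow_mul_sub_rpow (a b : ℝ) (ht : 0 < t) :
    ∫ s in (0 : ℝ)..t, s ^ (a - 1) * (t - s) ^ (b - 1) =
      t ^ (a + b - 1) * ∫ x in (0 : ℝ)..1, x ^ (a - 1) * (1 - x) ^ (b - 1) := by
  have hscale : ∫ x in (0 : ℝ)..1, (t * x) ^ (a - 1) * (t - t * x) ^ (b - 1) =
      t ^ (a + b - 2) * ∫ x in (0 : ℝ)..1, x ^ (a - 1) * (1 - x) ^ (b - 1) := by
    rw [← intervalIntegral.integral_const_mul]
    refine intervalIntegral.integral_congr fun x hx => ?_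
    rw [uIcc_of_le zero_le_one] at hx
    exact mul_rpow_mul_sub_mul_rpow ht hx
  have hsubst := intervalIntegral.smul_integral_comp_mul_left (a := 0) (b := 1)
    (fun s : ℝ => s ^ (a - 1) * (t - s) ^ (b - 1)) t
  rw [mul_zero, mul_one] at hsubst
  rw [← hsubst, hscale, smul_eq_mul, ← mul_assoc,
    show a + b - 1 = 1 + (a + b - 2) by ring, rpow_add ht, rpow_one]

end BetaIntegral

lemma integrableOn_prod_of_fibers {α β E : Type*} [MeasurableSpace α] [MeasurableSpace β]
    [NormedAddCommGroup E] {μ : Measure α} {ν : Measure β} [SFinite ν] {f : α × β → E}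
    {A : Set α} {T : α → Set β} (hA : MeasurableSet A)
    (hAT : MeasurableSet {p : α × β | p.1 ∈ A ∧ p.2 ∈ T p.1})
    (hf : AEStronglyMeasurable f (μ.prod ν))
    (hfiber : ∀ x ∈ A, IntegrableOn (fun y => f (x, y)) (T x) ν)
    (hnorm : IntegrableOn (fun x => ∫ y in T x, ‖f (x, y)‖ ∂ν) A μ) :
    IntegrableOn f {p : α × β | p.1 ∈ A ∧ p.2 ∈ T p.1} (μ.prod ν) := by
  set S := {p : α × β | p.1 ∈ A ∧ p.2 ∈ T p.1}
  have hT {x : α} (hx : x ∈ A) : MeasurableSet (T x) := by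
    simpa [S, hx] using measurable_prodMk_left (x := x) hAT
  have hmem {x : α} (hx : x ∈ A) :
      (fun y => S.indicator f (x, y)) = (T x).indicator fun y => f (x, y) := by
    ext y
    by_cases hy : y ∈ T x <;> simp [S, hx, hy]
  have hnotMem {x : α} (hx : x ∉ A) : (fun y => S.indicator f (x, y)) = 0 := by
    ext y; simp [S, hx]
  rw [← integrable_indicator_iff hAT, integrable_prod_iff (hf.indicator hAT)]
  refine ⟨.of_forall fun x => ?_, ?_⟩
  · by_cases hx : x ∈ A
    · rw [hmem hx, integrable_indicator_iff (hT hx)]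
      exact hfiber x hx
    · rw [hnotMem hx]
      exact integrable_zero _ _ _
  · refine (hnorm.integrable_indicator hA).congr (.of_forall fun x => ?_)
    by_cases hx : x ∈ A
    · simp only [indicator_of_mem hx, ← integral_indicator (hT hx),
        ← norm_indicator_eq_indicator_norm, ← congrFun (hmem hx)]
    · simp [hx, congrFun (hnotMem hx)]

section RieszEnergy

variable {a₁ a₂ b : ℝ}

lemma integrableOn_rpow_mul_rpow_mul_abs_sub_rpow_sector {r : ℝ} (ha₂ : 0 < a₂) (hb : 0 < b)
    (hsum : a₁ + a₂ + b < 1) (hr : 0 < r) :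
    IntegrableOn (fun p : ℝ × ℝ => p.1 ^ (a₁ - 1) * p.2 ^ (a₂ - 1) * |p.1 - p.2| ^ (b - 1))
      {p | p.1 ∈ Ioi r ∧ p.2 ∈ Ioc 0 p.1} := by
  have hker {t s : ℝ} (hs : s ∈ Ioc 0 t) :
      t ^ (a₁ - 1) * (s ^ (a₂ - 1) * (t - s) ^ (b - 1)) =
        t ^ (a₁ - 1) * s ^ (a₂ - 1) * |t - s| ^ (b - 1) := by
    rw [abs_of_nonneg (sub_nonneg.2 hs.2), mul_assoc]
  refine integrableOn_prod_of_fibers measurableSet_Ioi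
    (measurableSet_region_between_oc measurable_const measurable_id measurableSet_Ioi)
    (Measurable.aestronglyMeasurable (by fun_prop)) (fun t ht => ?_) ?_
  · have hint := intervalIntegrable_rpow_mul_sub_rpow ha₂ hb (hr.trans ht)
    rw [intervalIntegrable_iff_integrableOn_Ioc_of_le (hr.trans ht).le] at hint
    exact IntegrableOn.congr_fun (hint.const_mul (t ^ (a₁ - 1))) (fun s hs => hker hs)
      measurableSet_Ioc
  · have hpow : IntegrableOn (fun t : ℝ => t ^ (a₁ + a₂ + b - 2)) (Ioi r) :=
      integrableOn_Ioi_rpow_of_lt (by linarith) hr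
    refine IntegrableOn.congr_fun
      (hpow.mul_const (∫ x in (0 : ℝ)..1, x ^ (a₂ - 1) * (1 - x) ^ (b - 1)))
      (fun t ht => ?_) measurableSet_Ioi
    have ht0 : 0 < t := hr.trans ht
    have hnorm : ∀ s ∈ Ioc 0 t, ‖t ^ (a₁ - 1) * s ^ (a₂ - 1) * |t - s| ^ (b - 1)‖ =
        t ^ (a₁ - 1) * (s ^ (a₂ - 1) * (t - s) ^ (b - 1)) := fun s hs => by
      have hs0 : 0 < s := hs.1
      rw [norm_of_nonneg (by positivity), hker hs]
    rw [setIntegral_congr_fun measurableSet_Ioc hnorm, integral_const_mul,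
      ← intervalIntegral.integral_of_le ht0.le, integral_rpow_mul_sub_rpow a₂ b ht0,
      ← mul_assoc, ← rpow_add ht0]
    ring_nf

lemma integrableOn_rpow_mul_rpow_mul_abs_sub_rpow_Ioi {r : ℝ} (ha₁ : 0 < a₁) (ha₂ : 0 < a₂)
    (hb : 0 < b) (hsum : a₁ + a₂ + b < 1) (hr : 0 < r) :
    IntegrableOn (fun p : ℝ × ℝ => p.1 ^ (a₁ - 1) * p.2 ^ (a₂ - 1) * |p.1 - p.2| ^ (b - 1))
      (Ioi r ×ˢ Ioi r) := by
  have hlower := integrableOn_rpow_mul_rpow_mul_abs_sub_rpow_sector ha₂ hb hsum hr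
  have hupper : IntegrableOn
      (fun p : ℝ × ℝ => p.1 ^ (a₁ - 1) * p.2 ^ (a₂ - 1) * |p.1 - p.2| ^ (b - 1))
      {p | p.2 ∈ Ioi r ∧ p.1 ∈ Ioc 0 p.2} := by
    have hswap := integrableOn_rpow_mul_rpow_mul_abs_sub_rpow_sector (a₁ := a₂) ha₁ hb
      (by linarith) hr
    refine ((Measure.measurePreserving_swap.integrableOn_comp_preimage
      MeasurableEquiv.prodComm.measurableEmbedding).2 hswap).congr (.of_forall fun p => ?_)
    simp only [Function.comp_apply, Prod.fst_swap, Prod.snd_swap, abs_sub_comm p.2,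
      mul_comm (p.2 ^ (a₂ - 1))]
  refine (hlower.union hupper).mono_set fun p ⟨hp₁, hp₂⟩ => ?_
  rcases le_total p.2 p.1 with hle | hle
  · exact .inl ⟨hp₁, hr.trans hp₂, hle⟩
  · exact .inr ⟨hp₂, hr.trans hp₁, hle⟩

variable {c y : ℝ}

lemma integrableOn_sub_rpow_mul_sub_rpow_mul_abs_sub_rpow_Iio (ha₁ : 0 < a₁) (ha₂ : 0 < a₂)
    (hb : 0 < b) (hsum : a₁ + a₂ + b < 1) (hyc : y < c) :
    IntegrableOn
      (fun p : ℝ × ℝ => (c - p.1) ^ (a₁ - 1) * (c - p.2) ^ (a₂ - 1) * |p.1 - p.2| ^ (b - 1))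
      (Iio y ×ˢ Iio y) := by
  have hreflect := ((Measure.measurePreserving_sub_left volume
    ((c, c) : ℝ × ℝ)).integrableOn_comp_preimage (measurableEmbedding_subLeft _)).2
      (integrableOn_rpow_mul_rpow_mul_abs_sub_rpow_Ioi ha₁ ha₂ hb hsum (sub_pos.2 hyc))
  convert hreflect using 1
  · ext p
    simp only [Function.comp_apply, Prod.fst_sub, Prod.snd_sub, sub_sub_sub_cancel_left,
      abs_sub_comm p.2]
  · ext p
    simp

theorem integrable_mul_mul_abs_sub_rpow_of_le_sub_rpow {f g : ℝ → ℝ} {C D : ℝ}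
    (hf : AEStronglyMeasurable f) (hg : AEStronglyMeasurable g)
    (hf_supp : f.support ⊆ Iio y) (hg_supp : g.support ⊆ Iio y)
    (hf_le : ∀ u < y, |f u| ≤ C * (c - u) ^ (a₁ - 1))
    (hg_le : ∀ v < y, |g v| ≤ D * (c - v) ^ (a₂ - 1))
    (ha₁ : 0 < a₁) (ha₂ : 0 < a₂) (hb : 0 < b) (hsum : a₁ + a₂ + b < 1) (hyc : y < c) :
    Integrable fun p : ℝ × ℝ => f p.1 * g p.2 * |p.1 - p.2| ^ (b - 1) := by
  have hsupp : (fun p : ℝ × ℝ => f p.1 * g p.2 * |p.1 - p.2| ^ (b - 1)).support ⊆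
      Iio y ×ˢ Iio y := fun p hp =>
    ⟨hf_supp (left_ne_zero_of_mul (left_ne_zero_of_mul hp)),
      hg_supp (right_ne_zero_of_mul (left_ne_zero_of_mul hp))⟩
  have hmeas : AEStronglyMeasurable (fun p : ℝ × ℝ => f p.1 * g p.2 * |p.1 - p.2| ^ (b - 1)) :=
    (hf.comp_fst.mul hg.comp_snd).mul (Measurable.aestronglyMeasurable (by fun_prop))
  rw [← integrableOn_iff_integrable_of_support_subset hsupp]
  have hdom := (integrableOn_sub_rpow_mul_sub_rpow_mul_abs_sub_rpow_Iio ha₁ ha₂ hb hsum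
    hyc).const_mul (C * D)
  refine hdom.mono' hmeas.restrict
    (ae_restrict_of_forall_mem (measurableSet_Iio.prod measurableSet_Iio) fun p ⟨hu, hv⟩ => ?_)
  calc ‖f p.1 * g p.2 * |p.1 - p.2| ^ (b - 1)‖
      = |f p.1| * |g p.2| * |p.1 - p.2| ^ (b - 1) := by
        rw [norm_mul, norm_mul, norm_of_nonneg (rpow_nonneg (abs_nonneg (p.1 - p.2)) _),
          norm_eq_abs, norm_eq_abs]
    _ ≤ (C * (c - p.1) ^ (a₁ - 1)) * (D * (c - p.2) ^ (a₂ - 1)) * |p.1 - p.2| ^ (b - 1) := by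
        gcongr
        · exact (abs_nonneg _).trans (hf_le _ hu)
        · exact hf_le _ hu
        · exact hg_le _ hv
    _ = C * D * ((c - p.1) ^ (a₁ - 1) * (c - p.2) ^ (a₂ - 1) * |p.1 - p.2| ^ (b - 1)) := by ring

end RieszEnergy

section Kernel

lemma rpow_sub_sub_one_rpow_le {h t : ℝ} (hh : h ≤ 1) (ht : 1 ≤ t) :
    t ^ h - (t - 1) ^ h ≤ t ^ (h - 1) := by
  have ht0 : 0 < t := one_pos.trans_le ht
  have hmul : (t - 1) * t ^ (h - 1) ≤ (t - 1) ^ h := by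
    rcases ht.eq_or_lt with rfl | ht1
    · simpa using rpow_nonneg le_rfl h
    · have hpos : 0 < t - 1 := sub_pos.2 ht1
      calc (t - 1) * t ^ (h - 1) ≤ (t - 1) * (t - 1) ^ (h - 1) := by
            gcongr 1
            exact rpow_le_rpow_of_nonpos hpos (by linarith) (by linarith)
        _ = (t - 1) ^ h := by rw [mul_comm, ← rpow_add_one hpos.ne', sub_add_cancel]
  have hsplit : t ^ h = (t - 1) * t ^ (h - 1) + t ^ (h - 1) := by
    rw [← add_one_mul, sub_add_cancel, mul_comm, ← rpow_add_one ht0.ne', sub_add_cancel]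
  linarith

lemma max_one_rpow_sub_one_le {h t : ℝ} (hh0 : 0 ≤ h) (hh1 : h ≤ 1) (ht : 0 < t) :
    max 1 t ^ (h - 1) ≤ 2 * (1 + t) ^ (h - 1) := by
  have htwo : (1 / 2 : ℝ) ≤ 2 ^ (h - 1) := by
    rw [one_div, ← rpow_neg_one]
    exact rpow_le_rpow_of_exponent_le one_le_two (by linarith)
  have hsum : 1 + t ≤ 2 * max 1 t := by
    linarith [le_max_left 1 t, le_max_right 1 t]
  calc max 1 t ^ (h - 1) = 2 * (1 / 2 * max 1 t ^ (h - 1)) := by ring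
    _ ≤ 2 * (2 ^ (h - 1) * max 1 t ^ (h - 1)) := by gcongr
    _ = 2 * (2 * max 1 t) ^ (h - 1) := by rw [mul_rpow two_pos.le (by positivity)]
    _ ≤ 2 * (1 + t) ^ (h - 1) := by
      gcongr 1
      exact rpow_le_rpow_of_nonpos (by linarith) hsum (by linarith)

/-- The Mandelbrot–Van Ness kernel `u ↦ (1 - u)_+^h - (-u)_+^h`, whose integral against the
fractional Lévy process `L^d` is `h * Y^d(1)`. -/
noncomputable def mandelbrotVanNessKernel (h u : ℝ) : ℝ :=
  max (1 - u) 0 ^ h - max (-u) 0 ^ h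

lemma measurable_mandelbrotVanNessKernel (h : ℝ) : Measurable (mandelbrotVanNessKernel h) := by
  unfold mandelbrotVanNessKernel
  fun_prop

lemma support_mandelbrotVanNessKernel_subset (h : ℝ) :
    (mandelbrotVanNessKernel h).support ⊆ Iio 1 := by
  refine fun u hu => mem_Iio.2 (lt_of_not_ge fun hu1 => hu ?_)
  rw [mandelbrotVanNessKernel, max_eq_right (by linarith), max_eq_right (by linarith), sub_self]

lemma mandelbrotVanNessKernel_nonneg {h : ℝ} (hh : 0 ≤ h) (u : ℝ) :
    0 ≤ mandelbrotVanNessKernel h u :=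
  sub_nonneg.2 (rpow_le_rpow (le_max_right _ _) (max_le_max (by linarith) le_rfl) hh)

lemma mandelbrotVanNessKernel_le_max_one_rpow {h u : ℝ} (hh0 : 0 ≤ h) (hh1 : h ≤ 1) (hu : u < 1) :
    mandelbrotVanNessKernel h u ≤ max 1 (1 - u) ^ (h - 1) := by
  rw [mandelbrotVanNessKernel, max_eq_left (by linarith : 0 ≤ 1 - u)]
  rcases le_total 0 u with hu0 | hu0
  · rw [max_eq_left (by linarith : 1 - u ≤ 1), one_rpow]
    have hle_one : (1 - u) ^ h ≤ 1 := rpow_le_one (by linarith) (by linarith) hh0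
    have hnonneg : 0 ≤ max (-u) 0 ^ h := rpow_nonneg (le_max_right _ _) h
    linarith
  · rw [max_eq_right (by linarith : 1 ≤ 1 - u), max_eq_left (by linarith : 0 ≤ -u)]
    simpa using rpow_sub_sub_one_rpow_le hh1 (by linarith : 1 ≤ 1 - u)

lemma abs_mandelbrotVanNessKernel_le {h u : ℝ} (hh0 : 0 ≤ h) (hh1 : h ≤ 1) (hu : u < 1) :
    |mandelbrotVanNessKernel h u| ≤ 2 * (2 - u) ^ (h - 1) :=
  calc |mandelbrotVanNessKernel h u| = mandelbrotVanNessKernel h u :=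
        abs_of_nonneg (mandelbrotVanNessKernel_nonneg hh0 u)
    _ ≤ max 1 (1 - u) ^ (h - 1) := mandelbrotVanNessKernel_le_max_one_rpow hh0 hh1 hu
    _ ≤ 2 * (1 + (1 - u)) ^ (h - 1) := max_one_rpow_sub_one_le hh0 hh1 (sub_pos.2 hu)
    _ = 2 * (2 - u) ^ (h - 1) := by ring_nf

end Kernel

/-- finiteness of the second moment of `Y^d(1)`: for `d ∈ (0,1/2)` and
`h ∈ (0, 1/2−d)`, the function
`(u,v) ↦ ((1−u)_+^h − (−u)_+^h)((1−v)_+^h − (−v)_+^h)|u−v|^{2d−1}` is integrable on `ℝ × ℝ`. -/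
theorem Y_second_moment_finite (d h : ℝ) (hd0 : 0 < d) (hd2 : d < 1 / 2)
    (hh0 : 0 < h) (hh : h < 1 / 2 - d) :
    Integrable (fun p : ℝ × ℝ =>
        (max (1 - p.1) 0 ^ h - max (-p.1) 0 ^ h) * (max (1 - p.2) 0 ^ h - max (-p.2) 0 ^ h) *
          |p.1 - p.2| ^ (2 * d - 1)) := by
  have hmeas := (measurable_mandelbrotVanNessKernel h).aestronglyMeasurable (μ := volume)
  have hsupp := support_mandelbrotVanNessKernel_subset h
  have hdecay : ∀ u < 1, |mandelbrotVanNessKernel h u| ≤ 2 * (2 - u) ^ (h - 1) :=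
    fun _ => abs_mandelbrotVanNessKernel_le hh0.le (by linarith)
  exact integrable_mul_mul_abs_sub_rpow_of_le_sub_rpow hmeas hmeas hsupp hsupp hdecay hdecay
    hh0 hh0 (by linarith) (by linarith) one_lt_two
end

section
/- Let d ∈ (0,1/2), h ∈ (0, 1/2 − d), and t > 0. For α > 0 define F_α : ℝ → ℝ by F_α(u) = (α/(α + t − u))^{1−h} · 1_{(−∞,t)}(u) − (α/(α − u))^{1−h} · 1_{(−∞,0)}(u) − 1_{(0,t)}(u). Then lim_{α→∞} ∫_ℝ ∫_ℝ F_α(u) F_α(v) |u − v|^{2d−1} du dv = 0. -/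
open MeasureTheory Real Set Filter Topology

/-- The kernel of the increment `Z^d(t) − Z^d(0) − L^d(t)` (STATEMENT 17):
`F_α(u) = (α/(α+t−u))^{1−h} 1_{(−∞,t)}(u) − (α/(α−u))^{1−h} 1_{(−∞,0)}(u) − 1_{(0,t)}(u)`. -/
noncomputable def incrementKernel (h t α u : ℝ) : ℝ :=
  (Iio t).indicator (fun u => (α / (α + t - u)) ^ (1 - h)) u
    - (Iio (0 : ℝ)).indicator (fun u => (α / (α - u)) ^ (1 - h)) u
    - (Ioo (0 : ℝ) t).indicator 1 u

/-!
Put `m(u) = (1 + u⁻/α)^{h-1}`, the kernel of `Z^d(0)` extended by `1` to the positive half-line.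
Then `F_α(u) = m(u - t) - m(u)` for `u ≠ 0`, and `m` is nondecreasing, takes values in `[0, 1]` and
is `(1 - h)/α`-Lipschitz. So `|F_α| ≤ (1 - h) t/α` a.e. and, by telescoping, `∫ |F_α| ≤ t`. The
Riesz kernel `|x|^{2d-1}` is locally integrable and vanishes at infinity, and for such a kernel the
energy `∬ f(u) f(v) K(u - v)` tends to zero along functions that are bounded in `L¹` and tend
to zero uniformly: near the diagonal the uniform bound wins, away from it the kernel is small.
-/

section KernelEnergy

/-- The energy `∬ f(u) f(v) K(u - v) dμ(u) dμ(v)` of the density `f` for the convolution kernel `K`.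
For `K(x) = |x|^{2d-1}` it is, up to a constant, the second moment of `∫ f dL^d`. As for any Bochner
integral, it is only meaningful when the integrals converge absolutely. -/
noncomputable def kernelEnergy {E : Type*} [AddGroup E] [MeasurableSpace E] (μ : Measure E)
    (K f : E → ℝ) : ℝ :=
  ∫ v, ∫ u, f u * f v * K (u - v) ∂μ ∂μ

variable {E : Type*} [AddGroup E] [MeasurableSpace E] {μ : Measure E} {K : E → ℝ}

lemma kernelEnergy_congr_ae {f g : E → ℝ} (hfg : f =ᵐ[μ] g) :
    kernelEnergy μ K f = kernelEnergy μ K g := by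
  refine integral_congr_ae ?_
  filter_upwards [hfg] with v hv
  refine integral_congr_ae ?_
  filter_upwards [hfg] with u hu
  rw [hu, hv]

variable [MeasurableAdd E] [μ.IsAddRightInvariant]

lemma abs_integral_mul_comp_sub_le {f : E → ℝ} {S : Set E} {M ε : ℝ} (hS : MeasurableSet S)
    (hKS : IntegrableOn K S μ) (hε : 0 ≤ ε) (hKε : ∀ x ∉ S, |K x| ≤ ε) (hf : Integrable f μ)
    (hM : ∀ᵐ u ∂μ, |f u| ≤ M) (v : E) :
    |∫ u, f u * K (u - v) ∂μ| ≤ M * ∫ x in S, |K x| ∂μ + ε * ∫ u, |f u| ∂μ := by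
  have near_integrable : Integrable (fun u => M * S.indicator (fun x => |K x|) (u - v)) μ :=
    (((integrable_indicator_iff hS).2 hKS.abs).comp_sub_right v).const_mul M
  have far_integrable : Integrable (fun u => ε * |f u|) μ := hf.abs.const_mul ε
  have near_add_far : ∀ᵐ u ∂μ,
      ‖f u * K (u - v)‖ ≤ M * S.indicator (fun x => |K x|) (u - v) + ε * |f u| := by
    filter_upwards [hM] with u hu
    rw [norm_mul, norm_eq_abs, norm_eq_abs]
    by_cases huv : u - v ∈ S
    · rw [indicator_of_mem huv]
      exact le_add_of_le_of_nonneg (by gcongr) (by positivity)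
    · rw [indicator_of_notMem huv, mul_zero, zero_add, mul_comm]
      gcongr
      exact hKε _ huv
  calc |∫ u, f u * K (u - v) ∂μ|
      ≤ ∫ u, (M * S.indicator (fun x => |K x|) (u - v) + ε * |f u|) ∂μ :=
        norm_integral_le_of_norm_le (near_integrable.add far_integrable) near_add_far
    _ = M * ∫ x in S, |K x| ∂μ + ε * ∫ u, |f u| ∂μ := by
        rw [integral_add near_integrable far_integrable, integral_const_mul, integral_const_mul,
          integral_sub_right_eq_self (S.indicator fun x => |K x|) v, integral_indicator hS]

lemma abs_kernelEnergy_le {f : E → ℝ} {S : Set E} {M ε : ℝ} (hS : MeasurableSet S)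
    (hKS : IntegrableOn K S μ) (hε : 0 ≤ ε) (hKε : ∀ x ∉ S, |K x| ≤ ε) (hf : Integrable f μ)
    (hM : ∀ᵐ u ∂μ, |f u| ≤ M) :
    |kernelEnergy μ K f| ≤ (M * ∫ x in S, |K x| ∂μ + ε * ∫ u, |f u| ∂μ) * ∫ v, |f v| ∂μ := by
  rw [← integral_const_mul, ← norm_eq_abs, kernelEnergy]
  refine norm_integral_le_of_norm_le (hf.abs.const_mul _) (Eventually.of_forall fun v => ?_)
  simp only [mul_right_comm (f _) (f v)]
  rw [integral_mul_const, norm_mul]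
  exact mul_le_mul_of_nonneg_right (abs_integral_mul_comp_sub_le hS hKS hε hKε hf hM v)
    (abs_nonneg (f v))

theorem tendsto_kernelEnergy_zero [TopologicalSpace E] [T2Space E] [OpensMeasurableSpace E]
    {ι : Type*} {l : Filter ι} {f : ι → E → ℝ} {M : ι → ℝ} {C : ℝ}
    (hK : LocallyIntegrable K μ) (hK_zero : Tendsto K (cocompact E) (𝓝 0))
    (hf : ∀ᶠ i in l, Integrable (f i) μ) (hC : ∀ᶠ i in l, ∫ u, |f i u| ∂μ ≤ C)
    (hM : ∀ᶠ i in l, ∀ᵐ u ∂μ, |f i u| ≤ M i) (hM_zero : Tendsto M l (𝓝 0)) :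
    Tendsto (fun i => kernelEnergy μ K (f i)) l (𝓝 0) := by
  refine Metric.tendsto_nhds.2 fun δ hδ => ?_
  set ε := δ / (C ^ 2 + 1)
  have hε : 0 < ε := by positivity
  obtain ⟨S, hS, hKε⟩ : ∃ S, IsCompact S ∧ ∀ x ∉ S, |K x| ≤ ε := by
    obtain ⟨S, hS, hSK⟩ := mem_cocompact.1 (hK_zero (Metric.closedBall_mem_nhds 0 hε))
    exact ⟨S, hS, fun x hx => by simpa using hSK hx⟩
  have bound_tendsto : Tendsto (fun i => (|M i| * ∫ x in S, |K x| ∂μ + ε * C) * C) l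
      (𝓝 (ε * C ^ 2)) := by
    have := ((hM_zero.abs.mul_const (∫ x in S, |K x| ∂μ)).add_const (ε * C)).mul_const C
    rwa [abs_zero, zero_mul, zero_add, mul_assoc, ← sq] at this
  have limit_lt : ε * C ^ 2 < δ := by
    rw [div_mul_eq_mul_div, div_lt_iff₀ (by positivity)]
    linarith
  filter_upwards [hf, hC, hM, bound_tendsto.eventually_lt_const limit_lt] with i hfi hCi hMi hlt
  have C_nonneg : 0 ≤ C := (integral_nonneg fun u => abs_nonneg (f i u)).trans hCi
  rw [dist_zero_right]
  calc |kernelEnergy μ K (f i)|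
      ≤ (|M i| * ∫ x in S, |K x| ∂μ + ε * ∫ u, |f i u| ∂μ) * ∫ u, |f i u| ∂μ :=
        abs_kernelEnergy_le hS.measurableSet (hK.integrableOn_isCompact hS) hε.le hKε hfi
          (hMi.mono fun u hu => hu.trans (le_abs_self _))
    _ ≤ (|M i| * ∫ x in S, |K x| ∂μ + ε * C) * C := by gcongr
    _ < δ := hlt

end KernelEnergy

section RieszKernel

variable {E : Type*} [NormedAddCommGroup E] {s : ℝ}

lemma locallyIntegrable_norm_rpow [NormedSpace ℝ E] [FiniteDimensional ℝ E] [Nontrivial E]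
    [MeasurableSpace E] [BorelSpace E] {μ : Measure E} [μ.IsAddHaarMeasure]
    (hs : -(Module.finrank ℝ E : ℝ) < s) : LocallyIntegrable (fun x : E => ‖x‖ ^ s) μ :=
  locallyIntegrable_of_norm_le_rpow (C := 1) (α := -s) Module.finrank_pos (by linarith)
    (Eventually.of_forall fun x => by simp [abs_rpow_of_nonneg])
    (measurable_norm.pow_const s).aestronglyMeasurable

lemma tendsto_norm_rpow_cocompact_zero [ProperSpace E] (hs : s < 0) :
    Tendsto (fun x : E => ‖x‖ ^ s) (cocompact E) (𝓝 0) := by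
  simpa [Function.comp_def] using
    (tendsto_rpow_neg_atTop (neg_pos.2 hs)).comp (tendsto_norm_cocompact_atTop (E := E))

end RieszKernel

section MonotoneTranslate

variable {f : ℝ → ℝ} {a b c : ℝ}

lemma intervalIntegral_abs_comp_sub_right_sub_le_of_monotone (hf : Monotone f)
    (hab : ∀ x, f x ∈ Icc a b) (hc : 0 ≤ c) (p q : ℝ) :
    ∫ x in p..q, |f (x - c) - f x| ≤ c * (b - a) := by
  have hint (r s : ℝ) : IntervalIntegrable f volume r s := hf.intervalIntegrable
  have hint_shift : IntervalIntegrable (fun x => f (x - c)) volume p q :=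
    (hf.comp fun x y hxy => sub_le_sub_right hxy c).intervalIntegrable
  have upper : ∫ x in (q - c)..q, f x ≤ c * b := by
    calc ∫ x in (q - c)..q, f x ≤ ∫ _ in (q - c)..q, b :=
          intervalIntegral.integral_mono_on (by linarith) (hint _ _) (by simp) fun x _ => (hab x).2
      _ = c * b := by simp
  have lower : c * a ≤ ∫ x in (p - c)..p, f x := by
    calc c * a = ∫ _ in (p - c)..p, a := by simp
      _ ≤ ∫ x in (p - c)..p, f x :=
          intervalIntegral.integral_mono_on (by linarith) (by simp) (hint _ _) fun x _ => (hab x).1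
  calc ∫ x in p..q, |f (x - c) - f x|
      = ∫ x in p..q, (f x - f (x - c)) := by
        simp_rw [abs_of_nonpos (sub_nonpos.2 (hf (sub_le_self _ hc))), neg_sub]
    _ = (∫ x in p..q, f x) - ∫ x in (p - c)..(q - c), f x := by
        rw [intervalIntegral.integral_sub (hint _ _) hint_shift,
          intervalIntegral.integral_comp_sub_right]
    _ = (∫ x in (q - c)..q, f x) - ∫ x in (p - c)..p, f x :=
        intervalIntegral.integral_interval_sub_interval_comm' (hint _ _) (hint _ _) (hint _ _)
    _ ≤ c * (b - a) := by linarith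

lemma integrable_comp_sub_right_sub_of_monotone (hf : Monotone f) (hab : ∀ x, f x ∈ Icc a b)
    (hc : 0 ≤ c) : Integrable (fun x => f (x - c) - f x) := by
  have hloc : LocallyIntegrable (fun x => f (x - c) - f x) :=
    (hf.comp fun x y hxy => sub_le_sub_right hxy c).locallyIntegrable.sub hf.locallyIntegrable
  exact integrable_of_intervalIntegral_norm_bounded (c * (b - a))
    (fun i => (hloc.integrableOn_isCompact isCompact_Icc).mono_set Ioc_subset_Icc_self)
    tendsto_neg_atTop_atBot tendsto_id <| Eventually.of_forall fun i =>
      intervalIntegral_abs_comp_sub_right_sub_le_of_monotone hf hab hc (-i) i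

lemma integral_abs_comp_sub_right_sub_le_of_monotone (hf : Monotone f)
    (hab : ∀ x, f x ∈ Icc a b) (hc : 0 ≤ c) : ∫ x, |f (x - c) - f x| ≤ c * (b - a) :=
  le_of_tendsto'
    (intervalIntegral_tendsto_integral (integrable_comp_sub_right_sub_of_monotone hf hab hc).abs
      tendsto_neg_atTop_atBot tendsto_id)
    fun _ => intervalIntegral_abs_comp_sub_right_sub_le_of_monotone hf hab hc _ _

end MonotoneTranslate

lemma abs_rpow_sub_rpow_le_of_one_le {s x y : ℝ} (hs : s ≤ 1) (hx : 1 ≤ x) (hy : 1 ≤ y) :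
    |y ^ s - x ^ s| ≤ |s| * |y - x| := by
  refine (convex_Ici (1 : ℝ)).norm_image_sub_le_of_norm_hasDerivWithin_le
    (fun z hz => (hasDerivAt_rpow_const (Or.inl (zero_lt_one.trans_le hz).ne')).hasDerivWithinAt)
    (fun z (hz : 1 ≤ z) => ?_) hx hy
  rw [norm_mul, norm_of_nonneg (rpow_nonneg (zero_le_one.trans hz) _)]
  exact mul_le_of_le_one_right (norm_nonneg s) (rpow_le_one_of_one_le_of_nonpos hz (by linarith))

/-- The kernel `(α/(α-u))^{1-h}` of `Z^d(0)`, extended by `1` to `u ≥ 0`; here `u⁻ = max (-u) 0`.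
Its increment over time `t` is `F_α` outside `u = 0`. -/
noncomputable def extendedKernel (h α u : ℝ) : ℝ :=
  (1 + u⁻ / α) ^ (h - 1)

section ExtendedKernel

variable {h t α u : ℝ}

lemma extendedKernel_of_nonneg (hu : 0 ≤ u) : extendedKernel h α u = 1 := by
  simp [extendedKernel, negPart_eq_zero.2 hu]

lemma extendedKernel_of_nonpos (hα : 0 < α) (hu : u ≤ 0) :
    extendedKernel h α u = (α / (α - u)) ^ (1 - h) := by
  have hbase : α / (α - u) = (1 + u⁻ / α)⁻¹ := by
    rw [negPart_of_nonpos hu, one_add_div hα.ne', inv_div, sub_eq_add_neg]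
  rw [hbase, inv_rpow (by positivity), ← rpow_neg (by positivity), neg_sub, extendedKernel]

lemma extendedKernel_mem_Icc (hh : h ≤ 1) (hα : 0 < α) (u : ℝ) :
    extendedKernel h α u ∈ Icc 0 1 :=
  ⟨by unfold extendedKernel; positivity, rpow_le_one_of_one_le_of_nonpos
    (le_add_of_nonneg_right (by positivity)) (sub_nonpos.2 hh)⟩

lemma monotone_extendedKernel (hh : h ≤ 1) (hα : 0 < α) : Monotone (extendedKernel h α) := by
  intro u v huv
  have hneg : v⁻ ≤ u⁻ := negPart_anti huv
  exact rpow_le_rpow_of_nonpos (by positivity) (by gcongr) (sub_nonpos.2 hh)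

lemma abs_extendedKernel_sub_le (hh : h ≤ 2) (hα : 0 < α) (u v : ℝ) :
    |extendedKernel h α u - extendedKernel h α v| ≤ |h - 1| / α * |u - v| := by
  have one_le (w : ℝ) : 1 ≤ 1 + w⁻ / α := le_add_of_nonneg_right (by positivity)
  have negPart_lipschitz : |u⁻ - v⁻| ≤ |u - v| := by
    simpa [dist_eq] using lipschitzWith_negPart.dist_le_mul u v
  calc |extendedKernel h α u - extendedKernel h α v|
      ≤ |h - 1| * |(1 + u⁻ / α) - (1 + v⁻ / α)| :=
        abs_rpow_sub_rpow_le_of_one_le (by linarith) (one_le v) (one_le u)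
    _ = |h - 1| / α * |u⁻ - v⁻| := by
        rw [add_sub_add_left_eq_sub, ← sub_div, abs_div, abs_of_pos hα, mul_div_left_comm, mul_comm]
    _ ≤ |h - 1| / α * |u - v| := by gcongr

lemma incrementKernel_ae_eq (ht : 0 ≤ t) (hα : 0 < α) :
    incrementKernel h t α =ᵐ[volume]
      fun u => extendedKernel h α (u - t) - extendedKernel h α u := by
  filter_upwards [Measure.ae_ne volume 0] with u hu
  have shifted : α + t - u = α - (u - t) := by ring
  unfold incrementKernel
  rcases lt_or_gt_of_ne hu with hneg | hpos
  · have hut : u < t := hneg.trans_le ht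
    simp [hneg, hut, hneg.le.not_gt, shifted, extendedKernel_of_nonpos hα hneg.le,
      extendedKernel_of_nonpos hα (sub_nonpos.2 hut.le)]
  · rcases lt_or_ge u t with hut | htu
    · simp [hpos, hut, hpos.le.not_gt, shifted, extendedKernel_of_nonneg hpos.le,
        extendedKernel_of_nonpos hα (sub_nonpos.2 hut.le)]
    · simp [hpos.le.not_gt, htu.not_gt, extendedKernel_of_nonneg hpos.le,
        extendedKernel_of_nonneg (sub_nonneg.2 htu)]

end ExtendedKernel

theorem increment_converges_to_fLp_general (d h t : ℝ) (hd0 : 0 < d) (hd2 : d < 1 / 2)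
    (hh : h ≤ 1) (ht : 0 ≤ t) :
    Tendsto (fun α : ℝ =>
        ∫ v : ℝ, ∫ u : ℝ,
          incrementKernel h t α u * incrementKernel h t α v * |u - v| ^ (2 * d - 1))
      atTop (𝓝 0) := by
  suffices Tendsto (fun α => kernelEnergy volume (fun x : ℝ => ‖x‖ ^ (2 * d - 1))
      fun u => extendedKernel h α (u - t) - extendedKernel h α u) atTop (𝓝 0) by
    refine this.congr' ?_
    filter_upwards [eventually_gt_atTop 0] with α hα
    exact (kernelEnergy_congr_ae (incrementKernel_ae_eq ht hα)).symm
  have lipschitz_bound_tendsto : Tendsto (fun α : ℝ => |h - 1| / α * t) atTop (𝓝 0) := by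
    simpa using (tendsto_id.const_div_atTop |h - 1|).mul_const t
  refine tendsto_kernelEnergy_zero (C := t * (1 - 0)) (locallyIntegrable_norm_rpow (by simp [hd0]))
    (tendsto_norm_rpow_cocompact_zero (by linarith)) ?_ ?_ ?_ lipschitz_bound_tendsto
  all_goals filter_upwards [eventually_gt_atTop 0] with α hα
  · exact integrable_comp_sub_right_sub_of_monotone (monotone_extendedKernel hh hα)
      (extendedKernel_mem_Icc hh hα) ht
  · exact integral_abs_comp_sub_right_sub_le_of_monotone (monotone_extendedKernel hh hα)
      (extendedKernel_mem_Icc hh hα) ht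
  · refine Eventually.of_forall fun u => ?_
    simpa [abs_of_nonneg ht] using abs_extendedKernel_sub_le (by linarith) hα (u - t) u

/-- for `d ∈ (0,1/2)`, `h ∈ (0, 1/2−d)` and `t > 0`,
`∫∫ F_α(u) F_α(v) |u−v|^{2d−1} du dv → 0` as `α → ∞`; i.e. the increment
`Z^d(t) − Z^d(0)` converges in `L²` to `L^d(t)` as `α → ∞`. -/
theorem increment_converges_to_fLp (d h t : ℝ) (hd0 : 0 < d) (hd2 : d < 1 / 2)
    (hh0 : 0 < h) (hh : h < 1 / 2 - d) (ht : 0 < t) :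
    Tendsto (fun α : ℝ =>
        ∫ v : ℝ, ∫ u : ℝ,
          incrementKernel h t α u * incrementKernel h t α v * |u - v| ^ (2 * d - 1))
      atTop (𝓝 0) :=
  increment_converges_to_fLp_general d h t hd0 hd2 (by linarith) ht.le
end
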